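/- Uniform allocation dominates: Fix k ≥ 1, a demand-to-supply ratio β > 0 and M ≥ max{1, 1/β}. Given a service-range vector r ∈ [0, M]^n, let r̄ = (r̄, …, r̄) be the uniform allocation with r̄ = ‖r‖₁/n. There exist a constant C > 0 depending only on β, M (and k) and an integer N such that for all n ≥ N with m = βn: if ‖r − r̄‖₁ > θn where θ > C·(log n / n)^{1/3} in the case k = 1, or θ > C·n^{−1/(4(k+1))} in the case k ≥ 2, then μ_m(r̄) > μ_m(r). -/

import Mathlib

open MeasureTheory
open scoped Classical

noncomputable section

/-- A matching of a bipartite compatibility relation, given as a finite set of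
supply-demand pairs with compatible endpoints and pairwise distinct coordinates. -/
def IsBipMatching {a b : ℕ} (adj : Fin a → Fin b → Prop) (M : Finset (Fin a × Fin b)) : Prop :=
  (∀ e ∈ M, adj e.1 e.2) ∧
    ∀ e ∈ M, ∀ e' ∈ M, e ≠ e' → e.1 ≠ e'.1 ∧ e.2 ≠ e'.2

/-- The maximum cardinality of a matching of the bipartite compatibility relation. -/
def matchingNumber {a b : ℕ} (adj : Fin a → Fin b → Prop) : ℕ :=
  sSup {c | ∃ M : Finset (Fin a × Fin b), IsBipMatching adj M ∧ M.card = c}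

/-- The uniform measure on the unit cube `[0,1]^k`. -/
def unifCube (k : ℕ) : Measure (EuclideanSpace ℝ (Fin k)) :=
  volume.restrict {x | ∀ i, x i ∈ Set.Icc (0 : ℝ) 1}

/-- Compatibility: supply node `i` can serve demand node `j` iff the demand location is
within distance `(r i / n)^(1/k)` of the supply location. -/
def adjOf (k ntot : ℕ) {a b : ℕ} (S : Fin a → EuclideanSpace ℝ (Fin k)) (r : Fin a → ℝ)
    (D : Fin b → EuclideanSpace ℝ (Fin k)) (i : Fin a) (j : Fin b) : Prop :=
  dist (S i) (D j) ≤ (r i / (ntot : ℝ)) ^ ((1 : ℝ) / (k : ℝ))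

/-- Expected maximum matching size, with supply and demand locations i.i.d. uniform
on the unit cube `[0,1]^k`. -/
def muU (k ntot m : ℕ) {a : ℕ} (r : Fin a → ℝ) : ℝ :=
  ∫ S : Fin a → EuclideanSpace ℝ (Fin k),
    ∫ D : Fin m → EuclideanSpace ℝ (Fin k),
      (matchingNumber (fun i j => adjOf k ntot S r D i j) : ℝ)
        ∂(Measure.pi fun _ => unifCube k) ∂(Measure.pi fun _ => unifCube k)

/-- The non-increasing rearrangement of a finite real vector. -/
def descSort {n : ℕ} (x : Fin n → ℝ) : Fin n → ℝ :=
  x ∘ Tuple.sort (fun i => -x i)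

/-- `x` majorizes `y`. -/
def Majorizes {n : ℕ} (x y : Fin n → ℝ) : Prop :=
  (∀ ℓ : ℕ,
      ∑ i ∈ Finset.univ.filter (fun i : Fin n => (i : ℕ) < ℓ), descSort y i ≤
        ∑ i ∈ Finset.univ.filter (fun i : Fin n => (i : ℕ) < ℓ), descSort x i) ∧
    ∑ i, x i = ∑ i, y i

/-!
Resample the location of one supply node `p` and keep everything else fixed: the matching number is
a constant plus the indicator that `p` lands within its service radius of a critical demand node.
Cutting the union of the balls about the critical nodes along their Voronoi cells, which are
star-shaped, shows that the probability of this event is a concave function of the service range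
`r p`. Concavity is quantitative: with probability bounded below a critical demand node has exactly
one other demand node nearby, and averaging over the position of that competitor produces a genuine
quadratic term. Hence the Jensen gap of `μ_m` in each coordinate is at least a constant times
the variance of the entries of `r`.

Starting from the uniform allocation, replace the coordinates one after another by independent
random entries of `r`. Each replacement loses the Jensen gap, so the total loss is at least of order
`n * T ^ 2`, where `T` is the mean deviation of `r`. The resulting random vector differs from
a permutation of `r` only by the fluctuation of its empirical distribution, which by the Lipschitz
property of `μ_m` costs little enough for the loss to win as soon as `n * T ^ 3` exceeds a constant.
-/

open scoped BigOperators

section Matching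

variable {a b : ℕ} {adj adj' : Fin a → Fin b → Prop} {P : Finset (Fin a × Fin b)}
  {p : Fin a} {N N' : Fin b → Prop}

lemma bddAbove_card_isBipMatching (adj : Fin a → Fin b → Prop) :
    BddAbove {c | ∃ P : Finset (Fin a × Fin b), IsBipMatching adj P ∧ P.card = c} :=
  ⟨Fintype.card (Fin a × Fin b), by rintro c ⟨P, -, rfl⟩; exact P.card_le_univ⟩

lemma IsBipMatching.card_le_matchingNumber (h : IsBipMatching adj P) :
    P.card ≤ matchingNumber adj :=
  le_csSup (bddAbove_card_isBipMatching adj) ⟨P, h, rfl⟩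

lemma exists_isBipMatching_card_eq (adj : Fin a → Fin b → Prop) :
    ∃ P : Finset (Fin a × Fin b), IsBipMatching adj P ∧ P.card = matchingNumber adj :=
  Nat.sSup_mem (s := {c | ∃ P : Finset (Fin a × Fin b), IsBipMatching adj P ∧ P.card = c})
    ⟨0, ∅, by simp [IsBipMatching], rfl⟩ (bddAbove_card_isBipMatching adj)

lemma IsBipMatching.mono (h : IsBipMatching adj P) (hadj : ∀ e ∈ P, adj' e.1 e.2) :
    IsBipMatching adj' P :=
  ⟨hadj, h.2⟩

lemma IsBipMatching.subset {Q : Finset (Fin a × Fin b)} (h : IsBipMatching adj P) (hQ : Q ⊆ P) :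
    IsBipMatching adj Q :=
  ⟨fun e he => h.1 e (hQ he), fun e he e' he' => h.2 e (hQ he) e' (hQ he')⟩

lemma matchingNumber_mono (h : ∀ i j, adj i j → adj' i j) :
    matchingNumber adj ≤ matchingNumber adj' := by
  obtain ⟨P, hP, hcard⟩ := exists_isBipMatching_card_eq adj
  exact hcard ▸ (hP.mono fun e he => h _ _ (hP.1 e he)).card_le_matchingNumber

lemma matchingNumber_update_mono (adj : Fin a → Fin b → Prop) (p : Fin a)
    (h : ∀ j, N j → N' j) :
    matchingNumber (Function.update adj p N) ≤ matchingNumber (Function.update adj p N') := by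
  refine matchingNumber_mono fun i j hij => ?_
  rcases eq_or_ne i p with rfl | hi
  · rw [Function.update_self] at hij ⊢
    exact h j hij
  · rwa [Function.update_of_ne hi] at hij ⊢

lemma matchingNumber_comp_perm_ge (adj : Fin a → Fin b → Prop) (σ : Equiv.Perm (Fin a)) :
    matchingNumber adj ≤ matchingNumber (fun i j => adj (σ i) j) := by
  obtain ⟨P, hP, hcard⟩ := exists_isBipMatching_card_eq adj
  rw [← hcard, ← Finset.card_map (σ.symm.prodCongr (Equiv.refl (Fin b))).toEmbedding]
  refine IsBipMatching.card_le_matchingNumber ⟨fun e he => ?_, fun e he e' he' hne => ?_⟩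
  · obtain ⟨e₀, he₀, rfl⟩ := Finset.mem_map.1 he
    simpa using hP.1 e₀ he₀
  · obtain ⟨e₀, he₀, rfl⟩ := Finset.mem_map.1 he
    obtain ⟨e₁, he₁, rfl⟩ := Finset.mem_map.1 he'
    simpa using hP.2 e₀ he₀ e₁ he₁ fun h => hne (by rw [h])

lemma matchingNumber_comp_perm (adj : Fin a → Fin b → Prop) (σ : Equiv.Perm (Fin a)) :
    matchingNumber (fun i j => adj (σ i) j) = matchingNumber adj :=
  le_antisymm (by simpa using matchingNumber_comp_perm_ge (fun i j => adj (σ i) j) σ.symm)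
    (matchingNumber_comp_perm_ge adj σ)

/-- The matching number after the supply node `p` has lost all its compatibilities. -/
def matchingNumberWithout (adj : Fin a → Fin b → Prop) (p : Fin a) : ℕ :=
  matchingNumber (Function.update adj p fun _ => False)

/-- The demand nodes `j` such that making `j` the only neighbour of the supply node `p` already
increases the matching number of the graph without `p`. -/
def criticalSet (adj : Fin a → Fin b → Prop) (p : Fin a) : Finset (Fin b) :=
  {j | matchingNumberWithout adj p < matchingNumber (Function.update adj p (· = j))}

lemma mem_criticalSet {j : Fin b} :
    j ∈ criticalSet adj p ↔
      matchingNumberWithout adj p < matchingNumber (Function.update adj p (· = j)) := by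
  simp [criticalSet]

lemma matchingNumberWithout_le_update (adj : Fin a → Fin b → Prop) (p : Fin a)
    (N : Fin b → Prop) :
    matchingNumberWithout adj p ≤ matchingNumber (Function.update adj p N) :=
  matchingNumber_update_mono adj p fun _ h => h.elim

lemma IsBipMatching.card_filter_ne_le (h : IsBipMatching (Function.update adj p N) P) :
    (P.filter fun e => e.1 ≠ p).card ≤ matchingNumberWithout adj p := by
  refine IsBipMatching.card_le_matchingNumber
    ((h.subset (Finset.filter_subset _ _)).mono fun e he => ?_)
  obtain ⟨heP, hep⟩ := Finset.mem_filter.1 he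
  simpa only [Function.update_of_ne hep] using h.1 e heP

lemma IsBipMatching.eq_of_fst_eq (h : IsBipMatching adj P) {e e' : Fin a × Fin b} (he : e ∈ P)
    (he' : e' ∈ P) (hfst : e.1 = e'.1) : e = e' :=
  by_contra fun hne => (h.2 e he e' he' hne).1 hfst

lemma matchingNumber_update_le (adj : Fin a → Fin b → Prop) (p : Fin a) (N : Fin b → Prop) :
    matchingNumber (Function.update adj p N) ≤ matchingNumberWithout adj p + 1 := by
  obtain ⟨P, hP, hcard⟩ := exists_isBipMatching_card_eq (Function.update adj p N)
  have hone : (P.filter fun e => ¬ e.1 ≠ p).card ≤ 1 := by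
    refine Finset.card_le_one.2 fun e he e' he' => ?_
    simp only [Finset.mem_filter, not_not] at he he'
    exact hP.eq_of_fst_eq he.1 he'.1 (he.2.trans he'.2.symm)
  rw [← hcard, ← Finset.card_filter_add_card_filter_not (fun e => e.1 ≠ p)]
  exact add_le_add hP.card_filter_ne_le hone

lemma exists_mem_criticalSet_of_lt
    (h : matchingNumberWithout adj p < matchingNumber (Function.update adj p N)) :
    ∃ j ∈ criticalSet adj p, N j := by
  obtain ⟨P, hP, hcard⟩ := exists_isBipMatching_card_eq (Function.update adj p N)
  obtain ⟨e, heP, rfl⟩ : ∃ e ∈ P, e.1 = p := by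
    by_contra! hne
    have := hP.card_filter_ne_le
    rw [Finset.filter_true_of_mem hne, hcard] at this
    exact absurd h this.not_gt
  refine ⟨e.2, mem_criticalSet.2 (h.trans_le ?_), by simpa using hP.1 e heP⟩
  rw [← hcard]
  refine (hP.mono fun e' he' => ?_).card_le_matchingNumber
  rcases eq_or_ne e'.1 e.1 with hfst | hfst
  · simp [hP.eq_of_fst_eq he' heP hfst]
  · simpa only [Function.update_of_ne hfst] using hP.1 e' he'

lemma matchingNumber_update (adj : Fin a → Fin b → Prop) (p : Fin a) (N : Fin b → Prop) :
    matchingNumber (Function.update adj p N) =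
      matchingNumberWithout adj p + if ∃ j ∈ criticalSet adj p, N j then 1 else 0 := by
  have hge := matchingNumberWithout_le_update adj p N
  split_ifs with hex
  · obtain ⟨j, hj, hN⟩ := hex
    refine (matchingNumber_update_le adj p N).antisymm ((mem_criticalSet.1 hj).trans_le ?_)
    exact matchingNumber_update_mono adj p fun j' (hj' : j' = j) => hj' ▸ hN
  · exact hge.antisymm' (not_lt.1 fun hlt => hex (exists_mem_criticalSet_of_lt hlt))

lemma mem_criticalSet_of_isolated {j : Fin b} (h : ∀ i, i ≠ p → ¬ adj i j) :
    j ∈ criticalSet adj p := by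
  obtain ⟨P, hP, hcard⟩ := exists_isBipMatching_card_eq (Function.update adj p fun _ => False)
  have hfst : ∀ e ∈ P, e.1 ≠ p := fun e he hep => by simpa [hep] using hP.1 e he
  have hadj : ∀ e ∈ P, adj e.1 e.2 := fun e he => by
    simpa only [Function.update_of_ne (hfst e he)] using hP.1 e he
  have hsnd : ∀ e ∈ P, e.2 ≠ j := fun e he hej => h e.1 (hfst e he) (hej ▸ hadj e he)
  rw [mem_criticalSet, matchingNumberWithout, ← hcard, ← Nat.succ_le_iff, Nat.succ_eq_add_one,
    ← Finset.card_insert_of_notMem (fun hmem : (p, j) ∈ P => hfst _ hmem rfl)]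
  refine IsBipMatching.card_le_matchingNumber ⟨fun e he => ?_, fun e he e' he' hne => ?_⟩
  · rcases Finset.mem_insert.1 he with rfl | he
    · simp
    · simpa only [Function.update_of_ne (hfst e he)] using hadj e he
  · rcases Finset.mem_insert.1 he with rfl | he <;> rcases Finset.mem_insert.1 he' with rfl | he'
    · exact absurd rfl hne
    · exact ⟨(hfst _ he').symm, (hsnd _ he').symm⟩
    · exact ⟨hfst _ he, hsnd _ he⟩
    · exact hP.2 e he e' he' hne

end Matching

section Averages

variable {ι κ : Type*} [Fintype ι]

/-- The deficit in Jensen's inequality for `f` and the uniform distribution on the entries of `r`;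
it is nonnegative when `f` is concave. -/
def jensenGap (r : ι → ℝ) (f : ℝ → ℝ) : ℝ :=
  f (𝔼 i, r i) - 𝔼 i, f (r i)

/-- The variance of the uniform distribution on the entries of `r`. -/
def empVar (r : ι → ℝ) : ℝ :=
  𝔼 i, (r i - 𝔼 j, r j) ^ 2

section JensenGap

lemma expect_eq_sum_inv_card_smul (r : ι → ℝ) :
    𝔼 i, r i = ∑ i, (Fintype.card ι : ℝ)⁻¹ • r i := by
  rw [Fintype.expect_eq_sum_div_card, ← Finset.smul_sum, smul_eq_mul, inv_mul_eq_div]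

lemma jensenGap_sum (r : ι → ℝ) (t : Finset κ) (f : κ → ℝ → ℝ) :
    jensenGap r (fun x => ∑ j ∈ t, f j x) = ∑ j ∈ t, jensenGap r (f j) := by
  simp only [jensenGap, Finset.expect_sum_comm, Finset.sum_sub_distrib]

variable [Nonempty ι] {r : ι → ℝ} {s : Set ℝ}

lemma sum_univ_inv_card : ∑ _i : ι, (Fintype.card ι : ℝ)⁻¹ = 1 := by
  simp

lemma expect_mem_of_convex (hs : Convex ℝ s) (hr : ∀ i, r i ∈ s) : 𝔼 i, r i ∈ s := by
  rw [expect_eq_sum_inv_card_smul]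
  exact hs.sum_mem (fun _ _ => by positivity) sum_univ_inv_card fun i _ => hr i

lemma jensenGap_nonneg {f : ℝ → ℝ} (hf : ConcaveOn ℝ s f) (hr : ∀ i, r i ∈ s) :
    0 ≤ jensenGap r f := by
  rw [jensenGap, sub_nonneg, expect_eq_sum_inv_card_smul, expect_eq_sum_inv_card_smul]
  exact hf.le_map_sum (fun _ _ => by positivity) sum_univ_inv_card fun i _ => hr i

lemma jensenGap_const_add (r : ι → ℝ) (c : ℝ) (f : ℝ → ℝ) :
    jensenGap r (fun x => c + f x) = jensenGap r f := by
  rw [jensenGap, jensenGap, Finset.expect_add_distrib, Fintype.expect_const,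
    add_sub_add_left_eq_sub]

lemma jensenGap_congr {f g : ℝ → ℝ} (hs : Convex ℝ s) (hr : ∀ i, r i ∈ s) (h : Set.EqOn f g s) :
    jensenGap r f = jensenGap r g := by
  rw [jensenGap, jensenGap, h (expect_mem_of_convex hs hr)]
  simp only [fun i => h (hr i)]

lemma abs_jensenGap_le {f : ℝ → ℝ} {B : ℝ} (hs : Convex ℝ s) (hr : ∀ i, r i ∈ s)
    (hf : ∀ x ∈ s, f x ∈ Set.Icc 0 B) : |jensenGap r f| ≤ B := by
  have hmean := hf _ (expect_mem_of_convex hs hr)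
  have hvalues := expect_mem_of_convex (convex_Icc 0 B) fun i => hf _ (hr i)
  exact abs_sub_le_iff.2 ⟨by linarith [hmean.2, hvalues.1], by linarith [hmean.1, hvalues.2]⟩

lemma jensenGap_quadratic (r : ι → ℝ) (a b : ℝ) :
    jensenGap r (fun x => a * x - b * x ^ 2) = b * empVar r := by
  simp only [jensenGap, empVar, sub_sq, Finset.expect_sub_distrib, Finset.expect_add_distrib,
    ← Finset.mul_expect, ← Finset.expect_mul, Fintype.expect_const]
  ring

lemma empVar_le_expect_sub_sq (r : ι → ℝ) (t : ℝ) : empVar r ≤ 𝔼 i, (r i - t) ^ 2 := by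
  have hbias : 𝔼 i, (r i - t) ^ 2 = empVar r + (𝔼 i, r i - t) ^ 2 := by
    simp only [empVar, sub_sq, Finset.expect_sub_distrib, Finset.expect_add_distrib,
      ← Finset.mul_expect, ← Finset.expect_mul, Fintype.expect_const]
    ring
  linarith [sq_nonneg (𝔼 i, r i - t)]

lemma sq_expect_abs_sub_expect_le_empVar (r : ι → ℝ) :
    (𝔼 i, |r i - 𝔼 j, r j|) ^ 2 ≤ empVar r := by
  have hCS := Finset.expect_mul_sq_le_sq_mul_sq Finset.univ (fun i => |r i - 𝔼 j, r j|)
    fun _ => (1 : ℝ)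
  simpa [empVar, Fintype.expect_const] using hCS

end JensenGap

section Integral

variable {Ω : Type*} [MeasurableSpace Ω] {μ : Measure Ω} {r : ι → ℝ} {s : Set ℝ}
  {f : Ω → ℝ → ℝ}

lemma measurable_jensenGap (hf : ∀ x, Measurable fun ω => f ω x) :
    Measurable fun ω => jensenGap r (f ω) := by
  simp only [jensenGap, Fintype.expect_eq_sum_div_card]
  fun_prop

lemma integrable_expect {g : ι → Ω → ℝ} (hg : ∀ i, Integrable (g i) μ) :
    Integrable (fun ω => 𝔼 i, g i ω) μ := by
  simp only [Fintype.expect_eq_sum_div_card]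
  exact (integrable_finsetSum _ fun i _ => hg i).div_const _

lemma integral_expect {g : ι → Ω → ℝ} (hg : ∀ i, Integrable (g i) μ) :
    ∫ ω, 𝔼 i, g i ω ∂μ = 𝔼 i, ∫ ω, g i ω ∂μ := by
  simp only [Fintype.expect_eq_sum_div_card]
  rw [integral_div, integral_finsetSum _ fun i _ => hg i]

variable [Nonempty ι]

lemma integrable_jensenGap (hs : Convex ℝ s) (hr : ∀ i, r i ∈ s)
    (hf : ∀ x ∈ s, Integrable (fun ω => f ω x) μ) :
    Integrable (fun ω => jensenGap r (f ω)) μ :=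
  (hf _ (expect_mem_of_convex hs hr)).sub (integrable_expect fun i => hf _ (hr i))

lemma integral_jensenGap (hs : Convex ℝ s) (hr : ∀ i, r i ∈ s)
    (hf : ∀ x ∈ s, Integrable (fun ω => f ω x) μ) :
    ∫ ω, jensenGap r (f ω) ∂μ = jensenGap r fun x => ∫ ω, f ω x ∂μ := by
  simp only [jensenGap]
  rw [integral_sub (hf _ (expect_mem_of_convex hs hr)) (integrable_expect fun i => hf _ (hr i)),
    integral_expect fun i => hf _ (hr i)]

end Integral

section Resampling

variable [Fintype κ] [DecidableEq κ] [Nonempty ι]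

lemma expect_pi_eq_expect_expect_update (p : κ) (G : (κ → ι) → ℝ) :
    𝔼 τ, G τ = 𝔼 τ : κ → ι, 𝔼 a, G (Function.update τ p a) := by
  have hswap : Function.Involutive fun w : (κ → ι) × ι => (Function.update w.1 p w.2, w.1 p) :=
    fun w => by simp
  calc 𝔼 τ, G τ = 𝔼 w : (κ → ι) × ι, G w.1 := by
        rw [← Finset.univ_product_univ, Finset.expect_product]
        simp only [Fintype.expect_const]
    _ = 𝔼 w : (κ → ι) × ι, G (Function.update w.1 p w.2) :=
        (Fintype.expect_equiv hswap.toPerm _ _ fun _ => rfl).symm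
    _ = _ := by rw [← Finset.univ_product_univ, Finset.expect_product]

lemma expect_pi_sq_sum_eq {c : ι → ℝ} (hc : 𝔼 i, c i = 0) (s : Finset κ) :
    𝔼 τ : κ → ι, (∑ j ∈ s, c (τ j)) ^ 2 = s.card * 𝔼 i, c i ^ 2 := by
  induction s using Finset.induction_on with
  | empty => simp
  | insert p s hp ih =>
    have hupdate (τ : κ → ι) (a : ι) :
        ∑ j ∈ insert p s, c (Function.update τ p a j) = c a + ∑ j ∈ s, c (τ j) := by
      rw [Finset.sum_insert hp, Function.update_self]
      exact congrArg _ (Finset.sum_congr rfl fun j hj => by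
        rw [Function.update_of_ne (ne_of_mem_of_not_mem hj hp)])
    rw [expect_pi_eq_expect_expect_update p, Finset.card_insert_of_notMem hp]
    simp only [hupdate, add_sq, Finset.expect_add_distrib, ← Finset.expect_mul,
      ← Finset.mul_expect, hc, ih, Fintype.expect_const]
    push_cast
    ring

lemma abs_le_inv_add_mul_sq {l : ℝ} (hl : 0 < l) (y : ℝ) : |y| ≤ 1 / (2 * l) + l / 2 * y ^ 2 := by
  have hsq : 1 / (2 * l) + l / 2 * y ^ 2 - |y| = (l * |y| - 1) ^ 2 / (2 * l) := by
    rw [← sq_abs y]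
    field_simp
    ring
  linarith [show 0 ≤ (l * |y| - 1) ^ 2 / (2 * l) by positivity]

lemma expect_abs_sum_sub_sum_comp_le [DecidableEq ι] (v : ι → ℝ) {l : ℝ} (hl : 0 < l) :
    𝔼 τ : ι → ι, |∑ i, v i - ∑ i, v (τ i)| ≤ 1 / (2 * l) + l / 2 * (Fintype.card ι * empVar v) := by
  have hcentered : 𝔼 i, (v i - 𝔼 j, v j) = 0 := by
    rw [Finset.expect_sub_distrib, Fintype.expect_const, sub_self]
  have hsum (τ : ι → ι) : ∑ i, v i - ∑ i, v (τ i) = -∑ i, (v (τ i) - 𝔼 j, v j) := by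
    simp [Finset.sum_sub_distrib]
  calc 𝔼 τ : ι → ι, |∑ i, v i - ∑ i, v (τ i)|
      ≤ 𝔼 τ : ι → ι, (1 / (2 * l) + l / 2 * (∑ i, (v (τ i) - 𝔼 j, v j)) ^ 2) :=
        Finset.expect_le_expect fun τ _ => by
          rw [hsum, abs_neg]
          exact abs_le_inv_add_mul_sq hl _
    _ = _ := by
        rw [Finset.expect_add_distrib, Fintype.expect_const, ← Finset.mul_expect,
          expect_pi_sq_sum_eq hcentered, Finset.card_univ, empVar]

end Resampling

end Averages

section Threshold

/-- The indicator of `x < a`. Integrating over `x` turns comparisons of thresholds into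
comparisons of real numbers, as in the layer-cake formula. -/
def threshold (a x : ℝ) : ℝ :=
  (Set.Iio a).indicator 1 x

lemma threshold_eq_ite (a x : ℝ) : threshold a x = if x < a then 1 else 0 :=
  Set.indicator_apply _ _ _

lemma abs_threshold_sub_threshold (a b x : ℝ) :
    |threshold a x - threshold b x| = (Set.Ico (min a b) (max a b)).indicator 1 x := by
  simp only [threshold_eq_ite, Set.indicator_apply, Set.mem_Ico, min_le_iff, lt_max_iff,
    Pi.one_apply]
  by_cases ha : x < a <;> by_cases hb : x < b <;> simp [ha, hb, not_le.2, not_lt.1]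

lemma abs_threshold_sub_threshold_eq_sq (a b x : ℝ) :
    |threshold a x - threshold b x| = (threshold a x - threshold b x) ^ 2 := by
  simp only [threshold_eq_ite]
  split_ifs <;> norm_num

lemma integrable_abs_threshold_sub_threshold (a b : ℝ) :
    Integrable fun x => |threshold a x - threshold b x| := by
  simp only [abs_threshold_sub_threshold]
  exact (integrable_indicator_iff measurableSet_Ico).2 (integrableOn_const (by simp))

lemma integral_abs_threshold_sub_threshold (a b : ℝ) :
    ∫ x, |threshold a x - threshold b x| = |a - b| := by
  simp only [abs_threshold_sub_threshold]
  rw [integral_indicator_one measurableSet_Ico, Real.volume_real_Ico_of_le min_le_max,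
    max_sub_min_eq_abs']

lemma sum_abs_threshold_sub_of_monotone {ι : Type*} [Fintype ι] [LinearOrder ι] {a b : ι → ℝ}
    (ha : Monotone a) (hb : Monotone b) (x : ℝ) :
    ∑ i, |threshold (a i) x - threshold (b i) x| =
      |∑ i, threshold (a i) x - ∑ i, threshold (b i) x| := by
  have hupper {c : ι → ℝ} (hc : Monotone c) : IsUpperSet {i | x < c i} :=
    fun _ _ hij hi => lt_of_lt_of_le hi (hc hij)
  wlog hsub : {i | x < a i} ⊆ {i | x < b i} generalizing a b
  · simpa only [abs_sub_comm] using
      this hb ha (((hupper ha).total (hupper hb)).resolve_left hsub)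
  have hle (i : ι) : threshold (a i) x - threshold (b i) x ≤ 0 := by
    have : x < a i → x < b i := fun hi => hsub hi
    simp only [threshold_eq_ite]
    split_ifs <;> simp_all
  rw [← Finset.sum_sub_distrib, abs_of_nonpos (Finset.sum_nonpos fun i _ => hle i),
    ← Finset.sum_neg_distrib]
  exact Finset.sum_congr rfl fun i _ => abs_of_nonpos (hle i)

lemma integrable_abs_sum_threshold_sub {ι : Type*} [Fintype ι] (a b : ι → ℝ) :
    Integrable fun x => |∑ i, threshold (a i) x - ∑ i, threshold (b i) x| := by
  have hmeas (c : ℝ) : Measurable (threshold c) :=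
    measurable_one.indicator measurableSet_Iio
  refine (integrable_finsetSum Finset.univ fun i _ =>
    integrable_abs_threshold_sub_threshold (a i) (b i)).mono' (by fun_prop)
    (.of_forall fun x => ?_)
  rw [Real.norm_eq_abs, abs_abs, ← Finset.sum_sub_distrib]
  exact Finset.abs_sum_le_sum_abs _ _

end Threshold

section Comparison

variable {ι : Type*} [Fintype ι] [DecidableEq ι] {F : (ι → ℝ) → ℝ} {L : ℝ}

lemma sub_le_mul_sum_abs_sub_of_coordinatewise
    (hLip : ∀ (r : ι → ℝ) p x y, 0 ≤ x → 0 ≤ y →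
      |F (Function.update r p x) - F (Function.update r p y)| ≤ L * |x - y|)
    {a b : ι → ℝ} (ha : ∀ i, 0 ≤ a i) (hb : ∀ i, 0 ≤ b i) :
    F a - F b ≤ L * ∑ i, |a i - b i| := by
  suffices h : ∀ s : Finset ι, F (s.piecewise a b) - F b ≤ L * ∑ i ∈ s, |a i - b i| by
    simpa using h Finset.univ
  intro s
  induction s using Finset.induction_on with
  | empty => simp
  | insert p s hp ih =>
    have hstep := le_of_abs_le (hLip (s.piecewise a b) p (a p) (b p) (ha p) (hb p))
    have hself : Function.update (s.piecewise a b) p (b p) = s.piecewise a b :=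
      Function.update_eq_self_iff.2 (by simp [hp])
    rw [hself] at hstep
    rw [Finset.piecewise_insert, Finset.sum_insert hp]
    linarith

/-- Replacing the mean by an independent random entry of `r`, one coordinate at a time, loses at
least `g` per coordinate. -/
lemma expect_comp_le_sub_card_mul [Nonempty ι] {r : ι → ℝ} {s : Set ℝ} {g : ℝ}
    (hs : Convex ℝ s) (hr : ∀ i, r i ∈ s)
    (hgap : ∀ r₀ : ι → ℝ, (∀ i, r₀ i ∈ s) → ∀ p,
      g ≤ jensenGap r fun x => F (Function.update r₀ p x)) :
    𝔼 τ : ι → ι, F (r ∘ τ) ≤ F (fun _ => 𝔼 j, r j) - Fintype.card ι * g := by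
  suffices h : ∀ t : Finset ι, 𝔼 τ : ι → ι, F (t.piecewise (r ∘ τ) fun _ => 𝔼 j, r j) ≤
      F (fun _ => 𝔼 j, r j) - t.card * g by
    simpa using h Finset.univ
  intro t
  induction t using Finset.induction_on with
  | empty => simp
  | insert p t hp ih =>
    have hstep (τ : ι → ι) :
        𝔼 a, F ((insert p t).piecewise (r ∘ Function.update τ p a) fun _ => 𝔼 j, r j) ≤
          F (t.piecewise (r ∘ τ) fun _ => 𝔼 j, r j) - g := by
      set v := t.piecewise (r ∘ τ) fun _ => 𝔼 j, r j with hv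
      have hmem : ∀ i, v i ∈ s := fun i => by
        by_cases hi : i ∈ t <;> simp [hv, hi, hr, expect_mem_of_convex hs hr]
      have hself : Function.update v p (𝔼 j, r j) = v :=
        Function.update_eq_self_iff.2 (by simp [hv, hp])
      have hins (a : ι) : (insert p t).piecewise (r ∘ Function.update τ p a) (fun _ => 𝔼 j, r j) =
          Function.update v p (r a) := by
        rw [Finset.piecewise_insert, Function.comp_apply, Function.update_self, hv]
        congr 1
        refine t.piecewise_congr (fun i hi => ?_) fun _ _ => rfl
        simp [ne_of_mem_of_not_mem hi hp]
      have := hgap v hmem p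
      rw [jensenGap, hself] at this
      simp only [hins]
      linarith
    calc _ ≤ 𝔼 τ : ι → ι, (F (t.piecewise (r ∘ τ) fun _ => 𝔼 j, r j) - g) := by
          rw [expect_pi_eq_expect_expect_update p]
          exact Finset.expect_le_expect fun τ _ => hstep τ
      _ ≤ F (fun _ => 𝔼 j, r j) - (insert p t).card * g := by
          rw [Finset.expect_sub_distrib, Fintype.expect_const, Finset.card_insert_of_notMem hp]
          push_cast
          linarith

lemma expect_abs_sum_threshold_sub_le [Nonempty ι] {M l : ℝ} {r : ι → ℝ}
    (hr : ∀ i, r i ∈ Set.Icc 0 M) (hl : 0 < l) (t x : ℝ) :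
    𝔼 τ : ι → ι, |∑ i, threshold (r i) x - ∑ i, threshold (r (τ i)) x| ≤
      (Set.Icc 0 M).indicator (fun _ => 1 / (2 * l)) x +
        l / 2 * ∑ i, |threshold (r i) x - threshold t x| := by
  by_cases hx : x ∈ Set.Icc 0 M
  · have hvar : Fintype.card ι * empVar (fun i => threshold (r i) x) ≤
        ∑ i, |threshold (r i) x - threshold t x| := by
      simp only [abs_threshold_sub_threshold_eq_sq]
      rw [← Fintype.card_mul_expect]
      gcongr
      exact empVar_le_expect_sub_sq _ _
    rw [Set.indicator_of_mem hx]
    refine (expect_abs_sum_sub_sum_comp_le _ hl).trans ?_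
    gcongr
  · have hconst (i j : ι) : threshold (r i) x = threshold (r j) x := by
      have hi := hr i
      have hj := hr j
      simp only [threshold_eq_ite, Set.mem_Icc] at hi hj hx ⊢
      split_ifs <;> grind
    have hzero (τ : ι → ι) : ∑ i, threshold (r i) x - ∑ i, threshold (r (τ i)) x = 0 :=
      sub_eq_zero.2 (Finset.sum_congr rfl fun i _ => hconst i (τ i))
    simp only [hzero, abs_zero, Finset.expect_const_zero, Set.indicator_of_notMem hx, zero_add]
    positivity

lemma expect_integral_abs_sum_threshold_sub_le [Nonempty ι] {M l : ℝ} {r : ι → ℝ}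
    (hr : ∀ i, r i ∈ Set.Icc 0 M) (hl : 0 < l) (t : ℝ) :
    𝔼 τ : ι → ι, ∫ x, |∑ i, threshold (r i) x - ∑ i, threshold (r (τ i)) x| ≤
      M / (2 * l) + l / 2 * ∑ i, |r i - t| := by
  have hM : 0 ≤ M := let ⟨i⟩ := ‹Nonempty ι›; (hr i).1.trans (hr i).2
  have hbase : Integrable ((Set.Icc 0 M).indicator fun _ => 1 / (2 * l)) :=
    (integrable_indicator_iff measurableSet_Icc).2 (integrableOn_const (by simp))
  have hdeviation : Integrable fun x => l / 2 * ∑ i, |threshold (r i) x - threshold t x| :=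
    (integrable_finsetSum _ fun i _ => integrable_abs_threshold_sub_threshold _ _).const_mul _
  have hintegrable (τ : ι → ι) := integrable_abs_sum_threshold_sub r (r ∘ τ)
  calc _ = ∫ x, 𝔼 τ : ι → ι, |∑ i, threshold (r i) x - ∑ i, threshold (r (τ i)) x| :=
        (integral_expect hintegrable).symm
    _ ≤ ∫ x, ((Set.Icc 0 M).indicator (fun _ => 1 / (2 * l)) x +
          l / 2 * ∑ i, |threshold (r i) x - threshold t x|) :=
        integral_mono (integrable_expect hintegrable) (hbase.add hdeviation)
          (expect_abs_sum_threshold_sub_le hr hl t)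
    _ = M / (2 * l) + l / 2 * ∑ i, |r i - t| := by
        rw [integral_add hbase hdeviation, integral_indicator_const _ measurableSet_Icc,
          Real.volume_real_Icc_of_le hM, integral_const_mul,
          integral_finsetSum _ fun i _ => integrable_abs_threshold_sub_threshold _ _]
        simp only [integral_abs_threshold_sub_threshold, smul_eq_mul]
        ring

end Comparison

section SymmetricComparison

variable {n : ℕ} {F : (Fin n → ℝ) → ℝ} {L : ℝ}

/-- After sorting both vectors, their `ℓ¹` distance is the area between the counting functions of
their entries. -/
lemma sub_le_mul_integral_abs_sum_threshold_sub
    (hLip : ∀ (r : Fin n → ℝ) p x y, 0 ≤ x → 0 ≤ y →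
      |F (Function.update r p x) - F (Function.update r p y)| ≤ L * |x - y|)
    (hperm : ∀ (r : Fin n → ℝ) (σ : Equiv.Perm (Fin n)), F (r ∘ σ) = F r)
    {a b : Fin n → ℝ} (ha : ∀ i, 0 ≤ a i) (hb : ∀ i, 0 ≤ b i) :
    F a - F b ≤ L * ∫ x, |∑ i, threshold (a i) x - ∑ i, threshold (b i) x| := by
  have hcount (c : Fin n → ℝ) (x : ℝ) :
      ∑ i, threshold ((c ∘ Tuple.sort c) i) x = ∑ i, threshold (c i) x :=
    Equiv.sum_comp (Tuple.sort c) fun i => threshold (c i) x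
  calc F a - F b = F (a ∘ Tuple.sort a) - F (b ∘ Tuple.sort b) := by rw [hperm, hperm]
    _ ≤ L * ∑ i, |(a ∘ Tuple.sort a) i - (b ∘ Tuple.sort b) i| :=
        sub_le_mul_sum_abs_sub_of_coordinatewise hLip (fun _ => ha _) fun _ => hb _
    _ = L * ∫ x, ∑ i,
          |threshold ((a ∘ Tuple.sort a) i) x - threshold ((b ∘ Tuple.sort b) i) x| := by
        rw [integral_finsetSum _ fun i _ => integrable_abs_threshold_sub_threshold _ _]
        simp only [integral_abs_threshold_sub_threshold]
    _ = _ := by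
        simp only [sum_abs_threshold_sub_of_monotone (Tuple.monotone_sort a)
          (Tuple.monotone_sort b), hcount]

/-- The random vector `r ∘ τ` is at distance `O(√n)` from a permutation of `r`, while passing
from the mean to `r ∘ τ` loses `n * g`; the parameter `l` balances the two. -/
lemma le_const_expect_sub_add [NeZero n] {M g l : ℝ} {r : Fin n → ℝ} (hL : 0 ≤ L)
    (hr : ∀ i, r i ∈ Set.Icc 0 M)
    (hgap : ∀ r₀ : Fin n → ℝ, (∀ i, r₀ i ∈ Set.Icc 0 M) → ∀ p,
      g ≤ jensenGap r fun x => F (Function.update r₀ p x))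
    (hLip : ∀ (r : Fin n → ℝ) p x y, 0 ≤ x → 0 ≤ y →
      |F (Function.update r p x) - F (Function.update r p y)| ≤ L * |x - y|)
    (hperm : ∀ (r : Fin n → ℝ) (σ : Equiv.Perm (Fin n)), F (r ∘ σ) = F r) (hl : 0 < l) :
    F r ≤ F (fun _ => 𝔼 j, r j) - n * g + L * (M / (2 * l) + l / 2 * ∑ i, |r i - 𝔼 j, r j|) := by
  have hpath := expect_comp_le_sub_card_mul (convex_Icc 0 M) hr hgap
  have hdist : F r - 𝔼 τ : Fin n → Fin n, F (r ∘ τ) ≤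
      L * (M / (2 * l) + l / 2 * ∑ i, |r i - 𝔼 j, r j|) :=
    calc F r - 𝔼 τ : Fin n → Fin n, F (r ∘ τ) = 𝔼 τ : Fin n → Fin n, (F r - F (r ∘ τ)) := by
          rw [Finset.expect_sub_distrib, Fintype.expect_const]
      _ ≤ 𝔼 τ : Fin n → Fin n,
            L * ∫ x, |∑ i, threshold (r i) x - ∑ i, threshold (r (τ i)) x| :=
          Finset.expect_le_expect fun τ _ => sub_le_mul_integral_abs_sum_threshold_sub hLip hperm
            (fun i => (hr i).1) fun i => (hr (τ i)).1
      _ ≤ _ := by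
          rw [← Finset.mul_expect]
          exact mul_le_mul_of_nonneg_left (expect_integral_abs_sum_threshold_sub_le hr hl _) hL
  rw [Fintype.card_fin] at hpath
  linarith

end SymmetricComparison

section ConcavityFromScaling

/-- At the largest minimiser `y` of `g`, compare the increments over `[y, b]` and `[y²/b, y]`,
where `b` is slightly to the right of `y`. -/
lemma nonneg_of_scaled_increments {g : ℝ → ℝ} {x z : ℝ} (hx : 0 ≤ x)
    (hg : ContinuousOn g (Set.Icc x z))
    (hscale : ∀ l a b : ℝ, 0 < l → l ≤ 1 → 0 ≤ a → a ≤ b →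
      l * (g b - g a) ≤ g (l * b) - g (l * a))
    (hgx : 0 ≤ g x) (hgz : 0 ≤ g z) : ∀ y ∈ Set.Icc x z, 0 ≤ g y := by
  by_contra! ⟨y₀, hy₀, hneg₀⟩
  obtain ⟨y₁, hy₁, hmin⟩ := isCompact_Icc.exists_isMinOn ⟨y₀, hy₀⟩ hg
  have hcompact : IsCompact (Set.Icc x z ∩ g ⁻¹' {g y₁}) :=
    isCompact_Icc.of_isClosed_subset
      (hg.preimage_isClosed_of_isClosed isClosed_Icc isClosed_singleton) Set.inter_subset_left
  obtain ⟨y, ⟨hy, hgy : g y = g y₁⟩, hgreatest⟩ := hcompact.exists_isGreatest ⟨y₁, hy₁, rfl⟩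
  have hneg : g y < 0 := hgy.trans_lt ((hmin hy₀).trans_lt hneg₀)
  have hxy : x < y := hy.1.lt_of_ne fun h => (h ▸ hneg).not_ge hgx
  have hyz : y < z := hy.2.lt_of_ne fun h => (h ▸ hneg).not_ge hgz
  have hypos : 0 < y := hx.trans_lt hxy
  set b := min z (2 * y - x)
  have hyb : y < b := lt_min hyz (by linarith)
  have hbpos : 0 < b := hypos.trans hyb
  have hbmem : b ∈ Set.Icc x z := ⟨(hxy.trans hyb).le, min_le_left _ _⟩
  have hxyb : x ≤ y / b * y := by
    have : b ≤ 2 * y - x := min_le_right _ _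
    rw [div_mul_eq_mul_div, le_div_iff₀ hbpos]
    nlinarith [sq_nonneg (y - x)]
  have hyby : y / b * y ≤ y := mul_le_of_le_one_left hypos.le ((div_le_one hbpos).2 hyb.le)
  have hincr : y / b * (g b - g y) ≤ g y - g (y / b * y) := by
    simpa [div_mul_cancel₀ _ hbpos.ne'] using
      hscale (y / b) y b (by positivity) ((div_le_one hbpos).2 hyb.le) hypos.le hyb.le
  have hleft : g y ≤ g (y / b * y) := hgy ▸ hmin ⟨hxyb, hyby.trans hy.2⟩
  have hright : g b ≤ g y := by
    have := nonpos_of_mul_nonpos_right (hincr.trans (by linarith)) (div_pos hypos hbpos)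
    linarith
  exact hyb.not_ge (hgreatest ⟨hbmem, (hright.trans hgy.le).antisymm (hmin hbmem)⟩)

lemma concaveOn_Ici_of_scaled_increments {f : ℝ → ℝ} (hf : ContinuousOn f (Set.Ici 0))
    (hscale : ∀ l a b : ℝ, 0 < l → l ≤ 1 → 0 ≤ a → a ≤ b →
      l * (f b - f a) ≤ f (l * b) - f (l * a)) :
    ConcaveOn ℝ (Set.Ici 0) f := by
  refine concaveOn_iff_slope_anti_adjacent.2 ⟨convex_Ici 0, fun x y z hx _ hxy hyz => ?_⟩
  have hx : 0 ≤ x := hx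
  have hxz : 0 < z - x := by linarith
  set A := (f z - f x) / (z - x)
  have hchord : A * (z - x) = f z - f x := div_mul_cancel₀ _ hxz.ne'
  have habove := nonneg_of_scaled_increments (g := fun t => f t - (f x + A * (t - x))) hx
    ((hf.mono fun t ht => hx.trans ht.1).sub (by fun_prop))
    (fun l a b hl hl1 ha hab => by have := hscale l a b hl hl1 ha hab; linarith)
    (by simp) (by simp [hchord]) y ⟨hxy.le, hyz.le⟩
  rw [div_le_div_iff₀ (by linarith) (by linarith)]
  nlinarith

end ConcavityFromScaling

/-- The space in which the nodes live. -/
abbrev Loc (k : ℕ) : Type := EuclideanSpace ℝ (Fin k)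

/-- The service radius belonging to the service range `x`: a ball of this radius has volume
proportional to `x / n`. -/
def serviceRadius (k n : ℕ) (x : ℝ) : ℝ :=
  (x / n) ^ ((1 : ℝ) / k)

/-- The volume of the Euclidean unit ball in dimension `k`. -/
def unitBallVolume (k : ℕ) : ℝ :=
  volume.real (Metric.ball (0 : Loc k) 1)

/-- The volume of the part of `C` within the service radius for `x` of the demand location `d`. -/
def serviceArea (k n : ℕ) (C : Set (Loc k)) (d : Loc k) (x : ℝ) : ℝ :=
  volume.real (C ∩ Metric.closedBall d (serviceRadius k n x))

section Service

variable {k n : ℕ} {x y : ℝ} {C : Set (Loc k)}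

lemma unitBallVolume_pos (k : ℕ) : 0 < unitBallVolume k :=
  ENNReal.toReal_pos (Metric.measure_ball_pos _ _ one_pos).ne' measure_ball_lt_top.ne

lemma serviceRadius_nonneg (hx : 0 ≤ x) : 0 ≤ serviceRadius k n x := by
  unfold serviceRadius
  positivity

lemma serviceRadius_pow (hk : 1 ≤ k) (hx : 0 ≤ x) : serviceRadius k n x ^ k = x / n := by
  rw [serviceRadius, one_div, Real.rpow_inv_natCast_pow (by positivity) (by lia)]

lemma serviceRadius_mono (hx : 0 ≤ x) (hxy : x ≤ y) :
    serviceRadius k n x ≤ serviceRadius k n y := by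
  unfold serviceRadius
  gcongr

lemma serviceRadius_mul {l : ℝ} (hl : 0 ≤ l) (hx : 0 ≤ x) :
    serviceRadius k n (l * x) = l ^ ((1 : ℝ) / k) * serviceRadius k n x := by
  rw [serviceRadius, mul_div_assoc, Real.mul_rpow hl (by positivity), serviceRadius]

lemma volume_real_closedBall (d : Loc k) (hx : 0 ≤ x) :
    volume.real (Metric.closedBall d x) = x ^ k * unitBallVolume k := by
  rw [Measure.addHaar_real_closedBall _ d hx, finrank_euclideanSpace_fin, unitBallVolume]

lemma volume_real_closedBall_serviceRadius (hk : 1 ≤ k) (hx : 0 ≤ x) (d : Loc k) :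
    volume.real (Metric.closedBall d (serviceRadius k n x)) = x / n * unitBallVolume k := by
  rw [volume_real_closedBall d (serviceRadius_nonneg hx), serviceRadius_pow hk hx]

lemma measure_inter_closedBall_ne_top (C : Set (Loc k)) (d : Loc k) (ρ : ℝ) :
    volume (C ∩ Metric.closedBall d ρ) ≠ ⊤ :=
  measure_ne_top_of_subset Set.inter_subset_right measure_closedBall_lt_top.ne

lemma serviceArea_mem_Icc (hk : 1 ≤ k) (C : Set (Loc k)) (d : Loc k) {M : ℝ}
    (hx : x ∈ Set.Icc 0 M) : serviceArea k n C d x ∈ Set.Icc 0 (M / n * unitBallVolume k) := by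
  refine ⟨measureReal_nonneg, ?_⟩
  rw [← volume_real_closedBall_serviceRadius hk (hx.1.trans hx.2) d]
  exact measureReal_mono
    (Set.inter_subset_right.trans (Metric.closedBall_subset_closedBall
      (serviceRadius_mono hx.1 hx.2))) measure_closedBall_lt_top.ne

lemma serviceArea_sub (hC : MeasurableSet C) (d : Loc k) (hx : 0 ≤ x) (hxy : x ≤ y) :
    serviceArea k n C d y - serviceArea k n C d x =
      volume.real (C ∩ (Metric.closedBall d (serviceRadius k n y) \
        Metric.closedBall d (serviceRadius k n x))) := by
  rw [serviceArea, serviceArea, Set.inter_sdiff_distrib_left, measureReal_sdiff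
    (Set.inter_subset_inter_right _ (Metric.closedBall_subset_closedBall
      (serviceRadius_mono hx hxy)))
    (hC.inter measurableSet_closedBall) (measure_inter_closedBall_ne_top _ _ _)]

lemma serviceArea_sub_mem_Icc (hk : 1 ≤ k) (hC : MeasurableSet C) (d : Loc k) (hx : 0 ≤ x)
    (hxy : x ≤ y) :
    serviceArea k n C d y - serviceArea k n C d x ∈
      Set.Icc 0 (unitBallVolume k / n * (y - x)) := by
  rw [serviceArea_sub hC d hx hxy]
  refine ⟨measureReal_nonneg, ?_⟩
  calc _ ≤ volume.real (Set.univ ∩ (Metric.closedBall d (serviceRadius k n y) \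
          Metric.closedBall d (serviceRadius k n x))) := by
        refine measureReal_mono (by gcongr; exact Set.subset_univ C) ?_
        rw [Set.univ_inter]
        exact measure_ne_top_of_subset Set.sdiff_subset measure_closedBall_lt_top.ne
    _ = unitBallVolume k / n * (y - x) := by
        rw [← serviceArea_sub MeasurableSet.univ d hx hxy, serviceArea, serviceArea,
          Set.univ_inter, Set.univ_inter, volume_real_closedBall_serviceRadius hk hx,
          volume_real_closedBall_serviceRadius hk (hx.trans hxy)]
        ring

lemma abs_serviceArea_sub_le (hk : 1 ≤ k) (hC : MeasurableSet C) (d : Loc k) (hx : 0 ≤ x)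
    (hy : 0 ≤ y) :
    |serviceArea k n C d x - serviceArea k n C d y| ≤ unitBallVolume k / n * |x - y| := by
  wlog hyx : y ≤ x generalizing x y
  · rw [abs_sub_comm, abs_sub_comm x]
    exact this hy hx (le_of_not_ge hyx)
  have h := serviceArea_sub_mem_Icc (n := n) hk hC d hy hyx
  rw [abs_of_nonneg h.1, abs_of_nonneg (sub_nonneg.2 hyx)]
  exact h.2

lemma mul_serviceArea_sub_le_of_starConvex (hk : 1 ≤ k) (hC : MeasurableSet C) {d : Loc k}
    (hstar : StarConvex ℝ d C) {l : ℝ} (hl : 0 < l) (hl1 : l ≤ 1) (hx : 0 ≤ x) (hxy : x ≤ y) :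
    l * (serviceArea k n C d y - serviceArea k n C d x) ≤
      serviceArea k n C d (l * y) - serviceArea k n C d (l * x) := by
  set t : ℝ := l ^ ((1 : ℝ) / k) with ht
  have ht0 : 0 < t := by positivity
  have ht1 : t ≤ 1 := Real.rpow_le_one hl.le hl1 (by positivity)
  have htk : t ^ k = l := by rw [ht, one_div, Real.rpow_inv_natCast_pow hl.le (by lia)]
  rw [serviceArea_sub hC d hx hxy, serviceArea_sub hC d (by positivity) (by gcongr),
    serviceRadius_mul hl.le hx, serviceRadius_mul hl.le (hx.trans hxy), ← ht]
  set A := C ∩ (Metric.closedBall d (serviceRadius k n y) \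
    Metric.closedBall d (serviceRadius k n x))
  have hscaled : l * volume.real A = volume.real (AffineMap.homothety d t '' A) := by
    simp only [Measure.real]
    rw [Measure.addHaar_image_homothety, finrank_euclideanSpace_fin, htk, abs_of_pos hl,
      ENNReal.toReal_mul, ENNReal.toReal_ofReal hl.le]
  have hdist (w : Loc k) : dist (AffineMap.homothety d t w) d = t * dist w d := by
    rw [dist_homothety_center, Real.norm_of_nonneg ht0.le, dist_comm]
  rw [hscaled]
  refine measureReal_mono ?_ (measure_ne_top_of_subset
    (Set.inter_subset_inter_right _ Set.sdiff_subset) (measure_inter_closedBall_ne_top _ _ _))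
  rintro _ ⟨w, ⟨hwC, hwy, hwx⟩, rfl⟩
  rw [Metric.mem_closedBall] at hwx hwy
  refine ⟨?_, ?_, ?_⟩
  · rw [AffineMap.homothety_eq_lineMap, AffineMap.lineMap_apply_module]
    exact hstar hwC (by linarith) ht0.le (by ring)
  · rw [Metric.mem_closedBall, hdist]
    gcongr
  · rw [Metric.mem_closedBall, hdist, mul_le_mul_iff_right₀ ht0]
    exact hwx

lemma concaveOn_serviceArea (hk : 1 ≤ k) (hC : MeasurableSet C) {d : Loc k}
    (hstar : StarConvex ℝ d C) : ConcaveOn ℝ (Set.Ici 0) (serviceArea k n C d) := by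
  refine concaveOn_Ici_of_scaled_increments (LipschitzOnWith.continuousOn
    (K := Real.toNNReal (unitBallVolume k / n)) (.of_dist_le_mul fun x hx y hy => ?_))
    fun l a b hl hl1 ha hab => mul_serviceArea_sub_le_of_starConvex hk hC hstar hl hl1 ha hab
  rw [Real.coe_toNNReal _ (div_nonneg (unitBallVolume_pos k).le n.cast_nonneg), Real.dist_eq,
    Real.dist_eq]
  exact abs_serviceArea_sub_le hk hC d hx hy

end Service

section HalfSpace

lemma measureReal_prod_lt_eq_half {α : Type*} [MeasurableSpace α] (μ : Measure α)
    [IsFiniteMeasure μ] {φ : α → ℝ} (hφ : Measurable φ) (hties : ∀ a, μ {x | φ x = a} = 0) :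
    (μ.prod μ).real {q | φ q.1 < φ q.2} = μ.real Set.univ ^ 2 / 2 := by
  set s : Set (α × α) := {q | φ q.1 < φ q.2}
  have hs : MeasurableSet s := measurableSet_lt (by fun_prop) (by fun_prop)
  have hdiag : ∀ᵐ q ∂μ.prod μ, φ q.2 ≠ φ q.1 := by
    have hmeas : MeasurableSet {q : α × α | φ q.2 = φ q.1} :=
      measurableSet_eq_fun (by fun_prop) (by fun_prop)
    exact measure_eq_zero_iff_ae_notMem.1
      ((Measure.measure_prod_null hmeas).2 (ae_of_all _ fun x => hties (φ x)))
  have hswap : (μ.prod μ).real sᶜ = (μ.prod μ).real s := by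
    rw [← (Measure.measurePreserving_swap (μ := μ) (ν := μ)).measureReal_preimage
      hs.nullMeasurableSet]
    refine measureReal_congr (Filter.eventuallyEq_set.2 ?_)
    filter_upwards [hdiag] with q hq
    exact not_lt.trans hq.le_iff_lt
  have htotal := measureReal_add_measureReal_compl (μ := μ.prod μ) hs
  rw [hswap, ← Set.univ_prod_univ, measureReal_prod_prod] at htotal
  linarith

variable {k n : ℕ} {x M : ℝ}

/-- The points at least as close to `d` as to `z`: the part of space that demand location `d` keeps
when its only competitor is `z`. -/
def halfSpace (d z : Loc k) : Set (Loc k) :=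
  {y | dist y d ≤ dist y z}

/-- The pairs `(z, y)` for which `y` lies in the ball of radius `ρ` about `d` but outside of
`halfSpace d z`: the competitor `z` takes the location `y` away from `d`. -/
def stolenPairs (d : Loc k) (ρ : ℝ) : Set (Loc k × Loc k) :=
  {q | q.2 ∈ Metric.closedBall d ρ ∧ dist q.1 q.2 < dist q.2 d}

lemma measurableSet_stolenPairs (d : Loc k) (ρ : ℝ) : MeasurableSet (stolenPairs d ρ) := by
  rw [stolenPairs, Set.ofPred_and]
  exact (measurableSet_closedBall.preimage measurable_snd).inter
    (measurableSet_lt (by fun_prop) (by fun_prop))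

lemma halfSpace_inter_closedBall (d z : Loc k) (ρ : ℝ) :
    halfSpace d z ∩ Metric.closedBall d ρ =
      Metric.closedBall d ρ \ Prod.mk z ⁻¹' stolenPairs d ρ := by
  ext y
  simp only [halfSpace, stolenPairs, Set.mem_inter_iff, Set.mem_ofPred_eq, Set.mem_sdiff,
    Set.mem_preimage, dist_comm z y]
  grind

/-- For fixed `y`, the `z` in question fill the ball of radius `dist y d` about `y`, which is a
translate of the one about `d`. -/
lemma volume_stolenPairs (d : Loc k) (ρ : ℝ) :
    (volume : Measure (Loc k × Loc k)) (stolenPairs d ρ) =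
      volume {q : Loc k × Loc k | q.2 ∈ Metric.closedBall d ρ ∧ dist q.1 d < dist q.2 d} := by
  have hmeas : MeasurableSet
      {q : Loc k × Loc k | q.2 ∈ Metric.closedBall d ρ ∧ dist q.1 d < dist q.2 d} := by
    rw [Set.ofPred_and]
    exact (measurableSet_closedBall.preimage measurable_snd).inter
      (measurableSet_lt (by fun_prop) (by fun_prop))
  rw [Measure.volume_eq_prod, Measure.prod_apply_symm (measurableSet_stolenPairs d ρ),
    Measure.prod_apply_symm hmeas]
  refine lintegral_congr fun y => ?_
  by_cases hy : dist y d ≤ ρ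
  · simpa [stolenPairs, hy, Metric.ball] using
      (Measure.addHaar_ball_center volume y (dist y d)).trans
        (Measure.addHaar_ball_center volume d (dist y d)).symm
  · simp [stolenPairs, hy]

lemma volume_real_stolenPairs (hk : 1 ≤ k) (hx : 0 ≤ x) (d : Loc k) :
    volume.real (stolenPairs d (serviceRadius k n x)) = (x / n * unitBallVolume k) ^ 2 / 2 := by
  set ball := Metric.closedBall d (serviceRadius k n x)
  have : Nonempty (Fin k) := ⟨⟨0, hk⟩⟩
  have : IsFiniteMeasure (volume.restrict ball) := ⟨by simp [ball, measure_closedBall_lt_top]⟩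
  have hhalf := measureReal_prod_lt_eq_half (volume.restrict ball) (φ := (dist · d))
    (by fun_prop) fun a => Measure.absolutelyContinuous_of_le Measure.restrict_le_self
      (Measure.addHaar_sphere volume d a)
  rw [measureReal_restrict_apply_univ, volume_real_closedBall_serviceRadius hk hx] at hhalf
  rw [← hhalf, Measure.prod_restrict, measureReal_restrict_apply
    (measurableSet_lt (by fun_prop) (by fun_prop)), measureReal_def, volume_stolenPairs,
    measureReal_def, Measure.volume_eq_prod]
  congr 2
  ext q
  simp only [ball, Set.mem_inter_iff, Set.mem_ofPred_eq, Set.mem_prod, Metric.mem_closedBall]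
  grind

lemma volume_stolenPairs_ne_top (d : Loc k) (ρ : ℝ) : volume (stolenPairs d ρ) ≠ ⊤ := by
  have hfinite : (volume : Measure (Loc k × Loc k))
      (Metric.closedBall d ρ ×ˢ Metric.closedBall d ρ) ≠ ⊤ := by
    rw [Measure.volume_eq_prod, Measure.prod_prod]
    exact ENNReal.mul_ne_top measure_closedBall_lt_top.ne measure_closedBall_lt_top.ne
  rw [volume_stolenPairs]
  refine measure_ne_top_of_subset ?_ hfinite
  exact fun q hq => ⟨hq.2.le.trans hq.1, hq.1⟩

lemma stolenPairs_slice_eq_empty {d z : Loc k} {ρ R : ℝ} (hR : 2 * ρ ≤ R)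
    (hz : z ∉ Metric.closedBall d R) : Prod.mk z ⁻¹' stolenPairs d ρ = ∅ := by
  refine Set.eq_empty_of_forall_notMem fun y ⟨hy, hzy⟩ => hz ?_
  rw [Metric.mem_closedBall] at hy ⊢
  have := dist_triangle z y d
  linarith

lemma setIntegral_volume_real_slice_stolenPairs (d : Loc k) {ρ R : ℝ} (hR : 2 * ρ ≤ R) :
    ∫ z in Metric.closedBall d R, volume.real (Prod.mk z ⁻¹' stolenPairs d ρ) =
      volume.real (stolenPairs d ρ) := by
  have hmeas := measurableSet_stolenPairs d ρ
  rw [setIntegral_eq_integral_of_forall_compl_eq_zero fun z hz => by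
    rw [stolenPairs_slice_eq_empty hR hz, measureReal_empty]]
  simp only [measureReal_def]
  rw [integral_toReal (measurable_measure_prodMk_left hmeas).aemeasurable
    (Measure.ae_measure_lt_top hmeas (volume_stolenPairs_ne_top d ρ)), Measure.volume_eq_prod,
    Measure.prod_apply hmeas]

lemma setIntegral_serviceArea_halfSpace (hk : 1 ≤ k) (d : Loc k) (hx : x ∈ Set.Icc 0 M) :
    ∫ z in Metric.closedBall d (2 * serviceRadius k n M),
        serviceArea k n (halfSpace d z) d x =
      x / n * unitBallVolume k * volume.real (Metric.closedBall d (2 * serviceRadius k n M)) -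
        (x / n * unitBallVolume k) ^ 2 / 2 := by
  set ρ := serviceRadius k n x with hρ
  have hmeas := measurableSet_stolenPairs d ρ
  have hfinite := volume_stolenPairs_ne_top d ρ
  have hslice : ∀ z, serviceArea k n (halfSpace d z) d x =
      x / n * unitBallVolume k - volume.real (Prod.mk z ⁻¹' stolenPairs d ρ) := fun z => by
    rw [serviceArea, ← hρ, halfSpace_inter_closedBall, measureReal_sdiff (fun y hy => hy.1)
      (measurable_prodMk_left hmeas) measure_closedBall_lt_top.ne,
      volume_real_closedBall_serviceRadius hk hx.1]
  simp_rw [hslice]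
  rw [integral_sub (integrableOn_const measure_closedBall_lt_top.ne).integrable
    (Measure.integrable_measure_prodMk_left hmeas hfinite).integrableOn,
    setIntegral_volume_real_slice_stolenPairs d
      (by linarith [serviceRadius_mono (k := k) (n := n) hx.1 hx.2]),
    volume_real_stolenPairs hk hx.1, setIntegral_const, smul_eq_mul, mul_comm]

lemma measurable_serviceArea_halfSpace (k n : ℕ) (x : ℝ) :
    Measurable fun q : Loc k × Loc k => serviceArea k n (halfSpace q.1 q.2) q.1 x := by
  have : MeasurableSet {w : (Loc k × Loc k) × Loc k |
      dist w.2 w.1.1 ≤ dist w.2 w.1.2 ∧ dist w.2 w.1.1 ≤ serviceRadius k n x} := by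
    rw [Set.ofPred_and]
    exact (measurableSet_le (by fun_prop) (by fun_prop)).inter
      (measurableSet_le (by fun_prop) (by fun_prop))
  exact (measurable_measure_prodMk_left (ν := volume) this).ennreal_toReal

lemma integrableOn_serviceArea_halfSpace (hk : 1 ≤ k) (d : Loc k) (R : ℝ) (hx : 0 ≤ x) :
    IntegrableOn (fun z => serviceArea k n (halfSpace d z) d x) (Metric.closedBall d R) := by
  refine Measure.integrableOn_of_bounded (M := x / n * unitBallVolume k)
    measure_closedBall_lt_top.ne
    ((measurable_serviceArea_halfSpace k n x).comp measurable_prodMk_left).aestronglyMeasurable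
    (ae_of_all _ fun z => ?_)
  have harea := serviceArea_mem_Icc (n := n) hk (halfSpace d z) d ⟨hx, le_rfl⟩
  rw [Real.norm_of_nonneg harea.1]
  exact harea.2

/-- Averaging over the position of the competitor `z` turns the service area into a quadratic
function of the range, whose Jensen gap is a multiple of the variance. -/
lemma setIntegral_jensenGap_serviceArea_halfSpace {ι : Type*} [Fintype ι] [Nonempty ι]
    (hk : 1 ≤ k) (d : Loc k) {r : ι → ℝ} (hr : ∀ i, r i ∈ Set.Icc 0 M) :
    ∫ z in Metric.closedBall d (2 * serviceRadius k n M),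
        jensenGap r (serviceArea k n (halfSpace d z) d) =
      (unitBallVolume k / n) ^ 2 / 2 * empVar r := by
  rw [integral_jensenGap (convex_Icc 0 M) hr fun x hx =>
      integrableOn_serviceArea_halfSpace hk d _ hx.1,
    jensenGap_congr (convex_Icc 0 M) hr fun x hx => setIntegral_serviceArea_halfSpace hk d hx,
    ← jensenGap_quadratic r (unitBallVolume k / n *
      volume.real (Metric.closedBall d (2 * serviceRadius k n M)))]
  congr 1
  ext x
  ring

end HalfSpace

section Voronoi

variable {ι E : Type*} [LinearOrder ι]

/-- The Voronoi cell of the site `D i` among the sites `D l`, `l ∈ T`. A point equidistant from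
several nearest sites is assigned to the one of smallest index, so that the cells are disjoint. -/
def voronoiCell [Dist E] (T : Finset ι) (D : ι → E) (i : ι) : Set E :=
  {y | ∀ l ∈ T, toLex (dist y (D i), i) ≤ toLex (dist y (D l), l)}

lemma exists_mem_voronoiCell [Dist E] {T : Finset ι} (hT : T.Nonempty) (D : ι → E) (y : E) :
    ∃ i ∈ T, y ∈ voronoiCell T D i :=
  T.exists_min_image (fun l => toLex (dist y (D l), l)) hT

lemma dist_le_of_mem_voronoiCell [Dist E] {T : Finset ι} {D : ι → E} {i l : ι} {y : E}
    (hy : y ∈ voronoiCell T D i) (hl : l ∈ T) : dist y (D i) ≤ dist y (D l) :=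
  Prod.Lex.monotone_fst _ _ (hy l hl)

lemma pairwiseDisjoint_voronoiCell [Dist E] (T : Finset ι) (D : ι → E) :
    (T : Set ι).PairwiseDisjoint (voronoiCell T D) := by
  refine fun i hi j hj hij => Set.disjoint_left.2 fun y hyi hyj => hij ?_
  exact congrArg (fun q => (ofLex q).2) ((hyi j hj).antisymm (hyj i hi))

lemma voronoiCell_eq_iInter [Dist E] (T : Finset ι) (D : ι → E) (i : ι) :
    voronoiCell T D i = ⋂ l ∈ T, {y | dist y (D i) < dist y (D l) ∨
      i ≤ l ∧ dist y (D i) ≤ dist y (D l)} := by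
  ext y
  simp only [voronoiCell, Prod.Lex.toLex_le_toLex, Set.mem_ofPred_eq, Set.mem_iInter]
  grind

lemma measurableSet_voronoiCell [PseudoMetricSpace E] [MeasurableSpace E] [OpensMeasurableSpace E]
    (T : Finset ι) (D : ι → E) (i : ι) : MeasurableSet (voronoiCell T D i) := by
  rw [voronoiCell_eq_iInter]
  refine Finset.measurableSet_biInter T fun l _ => ?_
  rw [Set.ofPred_or, Set.ofPred_and]
  exact (measurableSet_lt (by fun_prop) (by fun_prop)).union
    ((MeasurableSet.const _).inter (measurableSet_le (by fun_prop) (by fun_prop)))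

variable [NormedAddCommGroup E] [NormedSpace ℝ E]

lemma dist_sub_dist_le_dist_homothety_sub {d y z : E} {t : ℝ} (ht : 0 ≤ t) (ht1 : t ≤ 1) :
    dist y z - dist y d ≤
      dist (AffineMap.homothety d t y) z - dist (AffineMap.homothety d t y) d := by
  have hcenter := dist_homothety_center d y t
  have hself := dist_self_homothety d y t
  rw [Real.norm_of_nonneg ht] at hcenter
  rw [Real.norm_of_nonneg (sub_nonneg.2 ht1)] at hself
  have htriangle := dist_triangle y (AffineMap.homothety d t y) z
  rw [dist_comm d y] at hcenter hself
  linarith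

lemma starConvex_voronoiCell (T : Finset ι) (D : ι → E) (i : ι) :
    StarConvex ℝ (D i) (voronoiCell T D i) := by
  rw [voronoiCell_eq_iInter]
  refine starConvex_iInter₂ fun l _ => starConvex_iff_segment_subset.2 fun y hy => ?_
  rw [segment_eq_image_lineMap]
  rintro _ ⟨t, ht, rfl⟩
  have := dist_sub_dist_le_dist_homothety_sub (d := D i) (y := y) (z := D l) ht.1 ht.2
  rw [AffineMap.homothety_eq_lineMap] at this
  exact hy.imp (fun h => by linarith) fun h => ⟨h.1, by linarith [h.2]⟩

end Voronoi

section Cube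

variable {k : ℕ}

/-- The cube `[a, b]^k`. -/
def cube (k : ℕ) (a b : ℝ) : Set (Loc k) :=
  {x | ∀ i, x i ∈ Set.Icc a b}

lemma cube_eq_iInter (k : ℕ) (a b : ℝ) :
    cube k a b = ⋂ i, (EuclideanSpace.proj i : Loc k →L[ℝ] ℝ) ⁻¹' Set.Icc a b := by
  ext x
  simp [cube]

lemma measurableSet_cube (k : ℕ) (a b : ℝ) : MeasurableSet (cube k a b) := by
  rw [cube_eq_iInter]
  exact MeasurableSet.iInter fun i => measurableSet_Icc.preimage (by fun_prop)

lemma convex_cube (k : ℕ) (a b : ℝ) : Convex ℝ (cube k a b) := by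
  rw [cube_eq_iInter]
  exact convex_iInter fun i =>
    (convex_Icc a b).linear_preimage (EuclideanSpace.proj i : Loc k →L[ℝ] ℝ).toLinearMap

lemma volume_cube (k : ℕ) (a b : ℝ) : volume (cube k a b) = ENNReal.ofReal (b - a) ^ k := by
  have hpre : cube k a b =
      (MeasurableEquiv.toLp 2 (Fin k → ℝ)).symm ⁻¹' Set.univ.pi fun _ => Set.Icc a b := by
    ext x
    simp [cube, Pi.le_def, forall_and]
  rw [hpre, (EuclideanSpace.volume_preserving_symm_measurableEquiv_toLp (Fin k)).measure_preimage
    (MeasurableSet.univ_pi fun _ => measurableSet_Icc).nullMeasurableSet, volume_pi,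
    Measure.pi_pi]
  simp

lemma closedBall_subset_cube {a b ρ : ℝ} {d : Loc k} (hd : d ∈ cube k (a + ρ) (b - ρ)) :
    Metric.closedBall d ρ ⊆ cube k a b := by
  intro y hy i
  have hcoord : |y i - d i| ≤ ρ := by
    simpa only [PiLp.sub_apply, Real.norm_eq_abs] using
      (PiLp.norm_apply_le (y - d) i).trans (dist_eq_norm y d ▸ hy)
  have hdi := hd i
  rw [abs_le] at hcoord
  exact ⟨by linarith [hdi.1], by linarith [hdi.2]⟩

instance isProbabilityMeasure_unifCube (k : ℕ) : IsProbabilityMeasure (unifCube k) := by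
  refine ⟨?_⟩
  rw [unifCube, Measure.restrict_apply_univ]
  exact (volume_cube k 0 1).trans (by simp)

lemma unifCube_real_eq_sum_serviceArea {m : ℕ} (n : ℕ) (T : Finset (Fin m)) (D : Fin m → Loc k)
    (x : ℝ) :
    (unifCube k).real {y | ∃ i ∈ T, dist y (D i) ≤ serviceRadius k n x} =
      ∑ i ∈ T, serviceArea k n (cube k 0 1 ∩ voronoiCell T D i) (D i) x := by
  have hmeas (i) : MeasurableSet
      ((cube k 0 1 ∩ voronoiCell T D i) ∩ Metric.closedBall (D i) (serviceRadius k n x)) :=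
    ((measurableSet_cube k 0 1).inter (measurableSet_voronoiCell T D i)).inter
      measurableSet_closedBall
  have hdisjoint : (T : Set (Fin m)).PairwiseDisjoint fun i =>
      (cube k 0 1 ∩ voronoiCell T D i) ∩ Metric.closedBall (D i) (serviceRadius k n x) :=
    (pairwiseDisjoint_voronoiCell T D).mono fun i =>
      Set.inter_subset_left.trans Set.inter_subset_right
  have hcover : {y | ∃ i ∈ T, dist y (D i) ≤ serviceRadius k n x} ∩ cube k 0 1 =
      ⋃ i ∈ T, (cube k 0 1 ∩ voronoiCell T D i) ∩
        Metric.closedBall (D i) (serviceRadius k n x) := by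
    ext y
    simp only [Set.mem_inter_iff, Set.mem_ofPred_eq, Set.mem_iUnion, exists_prop]
    constructor
    · rintro ⟨⟨i, hi, hle⟩, hy⟩
      obtain ⟨j, hj, hyj⟩ := exists_mem_voronoiCell ⟨i, hi⟩ D y
      exact ⟨j, hj, ⟨hy, hyj⟩, (dist_le_of_mem_voronoiCell hyj hi).trans hle⟩
    · rintro ⟨i, hi, ⟨hy, -⟩, hle⟩
      exact ⟨⟨i, hi, hle⟩, hy⟩
  calc (unifCube k).real {y | ∃ i ∈ T, dist y (D i) ≤ serviceRadius k n x}
      = volume.real ({y | ∃ i ∈ T, dist y (D i) ≤ serviceRadius k n x} ∩ cube k 0 1) :=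
        measureReal_restrict_apply' (measurableSet_cube k 0 1)
    _ = _ := by
        rw [hcover, measureReal_biUnion_finset hdisjoint (fun i _ => hmeas i)
          fun i _ => measure_inter_closedBall_ne_top _ _ _]
        rfl

end Cube

section Resampling

lemma measurePreserving_update {ι : Type*} [Fintype ι] [DecidableEq ι] {α : ι → Type*}
    [∀ i, MeasurableSpace (α i)] (μ : ∀ i, Measure (α i)) [∀ i, IsProbabilityMeasure (μ i)]
    (i : ι) :
    MeasurePreserving (fun q : (∀ i, α i) × α i => Function.update q.1 i q.2)
      ((Measure.pi μ).prod (μ i)) (Measure.pi μ) := by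
  refine ⟨measurable_update', (Measure.pi_eq fun s hs => ?_).symm⟩
  have hpre : (fun q : (∀ i, α i) × α i => Function.update q.1 i q.2) ⁻¹' Set.univ.pi s =
      (Set.univ.pi (Function.update s i Set.univ)) ×ˢ s i := by
    ext q
    simp only [Set.mem_preimage, Set.mem_univ_pi, Set.mem_prod]
    grind [Function.update]
  rw [Measure.map_apply measurable_update' (MeasurableSet.univ_pi hs), hpre, Measure.prod_prod,
    Measure.pi_pi, ← Finset.prod_erase_mul _ _ (Finset.mem_univ i), Function.update_self,
    measure_univ, mul_one, ← Finset.prod_erase_mul _ (fun j => μ j (s j)) (Finset.mem_univ i)]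
  congr 1
  exact Finset.prod_congr rfl fun j hj => by rw [Function.update_of_ne (Finset.ne_of_mem_erase hj)]

lemma integral_eq_integral_integral_of_measurePreserving {α β : Type*} [MeasurableSpace α]
    [MeasurableSpace β] {μ : Measure α} {ν : Measure β} [SFinite μ] [SFinite ν] {Φ : α × β → α}
    (hΦ : MeasurePreserving Φ (μ.prod ν) μ) {f : α → ℝ} (hf : Integrable f μ) :
    ∫ x, f x ∂μ = ∫ x, ∫ y, f (Φ (x, y)) ∂ν ∂μ := by
  have hfmap : AEStronglyMeasurable f ((μ.prod ν).map Φ) := by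
    rw [hΦ.map_eq]
    exact hf.aestronglyMeasurable
  rw [← integral_prod (fun w => f (Φ w)) (hΦ.integrable_comp_of_integrable hf),
    ← integral_map hΦ.aemeasurable hfmap, hΦ.map_eq]

end Resampling

section Configurations

/-- The locations of `n` supply and `m` demand nodes. -/
abbrev Config (k n m : ℕ) : Type := (Fin n → Loc k) × (Fin m → Loc k)

/-- The law of independent uniform supply and demand locations. -/
abbrev configMeasure (k n m : ℕ) : Measure (Config k n m) :=
  (Measure.pi fun _ => unifCube k).prod (Measure.pi fun _ => unifCube k)

variable {k n m : ℕ}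

lemma measurePreserving_update_supply (p : Fin n) :
    MeasurePreserving
      (fun w : Config k n m × Loc k => ((Function.update w.1.1 p w.2, w.1.2) : Config k n m))
      ((configMeasure k n m).prod (unifCube k)) (configMeasure k n m) :=
  Measure.measurePreserving_swap.comp
    (((MeasurePreserving.id (Measure.pi fun _ : Fin m => unifCube k)).prod
      (measurePreserving_update (fun _ => unifCube k) p)).comp
      ((measurePreserving_prodAssoc _ _ _).comp
        (Measure.measurePreserving_swap.prod (MeasurePreserving.id _))))

lemma measurePreserving_update_demand (j : Fin m) :
    MeasurePreserving
      (fun w : Config k n m × Loc k => ((w.1.1, Function.update w.1.2 j w.2) : Config k n m))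
      ((configMeasure k n m).prod (unifCube k)) (configMeasure k n m) :=
  ((MeasurePreserving.id (Measure.pi fun _ : Fin n => unifCube k)).prod
    (measurePreserving_update (fun _ => unifCube k) j)).comp (measurePreserving_prodAssoc _ _ _)

lemma ae_demand_mem_cube (k n m : ℕ) : ∀ᵐ q ∂configMeasure k n m, ∀ j, q.2 j ∈ cube k 0 1 := by
  have hcube : ∀ᵐ d ∂unifCube k, d ∈ cube k 0 1 := ae_restrict_mem (measurableSet_cube k 0 1)
  exact Measure.quasiMeasurePreserving_snd.ae (ae_all_iff.2 fun j =>
    (Measure.tendsto_eval_ae_ae (μ := fun _ : Fin m => unifCube k) (i := j)).eventually hcube)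

lemma adjOf_update_update (q : Config k n m) (r : Fin n → ℝ) (p : Fin n) (s : Loc k) (x : ℝ) :
    adjOf k n (Function.update q.1 p s) (Function.update r p x) q.2 =
      Function.update (adjOf k n q.1 r q.2) p fun j => dist s (q.2 j) ≤ serviceRadius k n x := by
  funext i j
  by_cases h : i = p
  · subst h
    simp [adjOf, serviceRadius]
  · simp [adjOf, Function.update_of_ne h]

lemma measurable_adjOf (r : Fin n → ℝ) :
    Measurable fun q : Config k n m => adjOf k n q.1 r q.2 := by
  refine measurable_pi_iff.2 fun i => measurable_pi_iff.2 fun j => measurableSet_setOfPred.1 ?_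
  exact measurableSet_le (by fun_prop) measurable_const

lemma integrable_comp_adjOf (r : Fin n → ℝ) (F : (Fin n → Fin m → Prop) → ℝ) :
    Integrable (fun q : Config k n m => F (adjOf k n q.1 r q.2)) (configMeasure k n m) :=
  Integrable.comp_measurable (g := F) Integrable.of_finite (measurable_adjOf r)

lemma muU_eq_integral (r : Fin n → ℝ) :
    muU k n m r =
      ∫ q, (matchingNumber (adjOf k n q.1 r q.2) : ℝ) ∂configMeasure k n m :=
  (integral_prod _ (integrable_comp_adjOf r fun adj => (matchingNumber adj : ℝ))).symm

lemma muU_comp_perm (r : Fin n → ℝ) (σ : Equiv.Perm (Fin n)) :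
    muU k n m (r ∘ σ) = muU k n m r := by
  have hσ : MeasurePreserving (MeasurableEquiv.piCongrLeft (fun _ : Fin n => Loc k) σ.symm)
      (Measure.pi fun _ => unifCube k) (Measure.pi fun _ => unifCube k) :=
    measurePreserving_piCongrLeft (fun _ => unifCube k) σ.symm
  rw [muU, ← hσ.integral_comp']
  refine integral_congr_ae (ae_of_all _ fun S => integral_congr_ae (ae_of_all _ fun D => ?_))
  have hS (i) : MeasurableEquiv.piCongrLeft (fun _ : Fin n => Loc k) σ.symm S i = S (σ i) := by
    simpa using MeasurableEquiv.piCongrLeft_apply_apply (β := fun _ : Fin n => Loc k) σ.symm S (σ i)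
  simp only [adjOf, hS, Function.comp_apply]
  exact congrArg Nat.cast (matchingNumber_comp_perm (adjOf k n S r D) σ)

/-- The conditional probability, given all other locations, that supply node `p` is within the
service radius for `x` of a critical demand node, i.e. that serving with range `x` from `p`
increases the matching number. -/
def gainProb (r : Fin n → ℝ) (p : Fin n) (q : Config k n m) (x : ℝ) : ℝ :=
  (unifCube k).real {s | ∃ j ∈ criticalSet (adjOf k n q.1 r q.2) p,
    dist s (q.2 j) ≤ serviceRadius k n x}

lemma gainProb_eq_sum (r : Fin n → ℝ) (p : Fin n) (q : Config k n m) (x : ℝ) :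
    gainProb r p q x = ∑ j ∈ criticalSet (adjOf k n q.1 r q.2) p, serviceArea k n
      (cube k 0 1 ∩ voronoiCell (criticalSet (adjOf k n q.1 r q.2) p) q.2 j) (q.2 j) x :=
  unifCube_real_eq_sum_serviceArea n _ q.2 x

lemma measurableSet_gain (r : Fin n → ℝ) (p : Fin n) (x : ℝ) :
    MeasurableSet {w : Config k n m × Loc k | ∃ j ∈ criticalSet (adjOf k n w.1.1 r w.1.2) p,
      dist w.2 (w.1.2 j) ≤ serviceRadius k n x} := by
  refine measurableSet_setOfPred.2 (Measurable.exists fun j => Measurable.and ?_ ?_)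
  · exact (Measurable.of_discrete (f := fun adj => j ∈ criticalSet adj p)).comp
      ((measurable_adjOf r).comp measurable_fst)
  · exact measurableSet_setOfPred.1 (measurableSet_le (by fun_prop) measurable_const)

lemma integrable_gainProb (r : Fin n → ℝ) (p : Fin n) (x : ℝ) :
    Integrable (fun q : Config k n m => gainProb r p q x) (configMeasure k n m) := by
  refine Integrable.of_bound (C := 1) ?_ (ae_of_all _ fun q => ?_)
  · exact (measurable_measure_prodMk_left (ν := unifCube k)
      (measurableSet_gain r p x)).ennreal_toReal.aestronglyMeasurable
  · rw [gainProb, Real.norm_of_nonneg measureReal_nonneg]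
    exact measureReal_le_one

/-- Resample the location of supply node `p`. -/
lemma muU_update (r : Fin n → ℝ) (p : Fin n) (x : ℝ) :
    muU k n m (Function.update r p x) =
      ∫ q, ((matchingNumberWithout (adjOf k n q.1 r q.2) p : ℝ) + gainProb r p q x)
        ∂configMeasure k n m := by
  rw [muU_eq_integral, integral_eq_integral_integral_of_measurePreserving
    (measurePreserving_update_supply p)
    (integrable_comp_adjOf _ fun adj => (matchingNumber adj : ℝ))]
  refine integral_congr_ae (ae_of_all _ fun q => ?_)
  set A : Set (Loc k) := {s | ∃ j ∈ criticalSet (adjOf k n q.1 r q.2) p,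
    dist s (q.2 j) ≤ serviceRadius k n x} with hA
  have hmeas : MeasurableSet A := measurable_prodMk_left (measurableSet_gain r p x)
  calc _ = ∫ s, ((matchingNumberWithout (adjOf k n q.1 r q.2) p : ℝ) + A.indicator 1 s)
          ∂unifCube k := by
        simp [adjOf_update_update, matchingNumber_update, Set.indicator_apply, hA]
    _ = matchingNumberWithout (adjOf k n q.1 r q.2) p + gainProb r p q x := by
        rw [integral_add (integrable_const _) ((integrable_const 1).indicator hmeas),
          integral_const, probReal_univ, one_smul, integral_indicator_one hmeas, gainProb]

lemma integrable_matchingNumberWithout_add_gainProb (r : Fin n → ℝ) (p : Fin n) (x : ℝ) :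
    Integrable (fun q : Config k n m =>
      (matchingNumberWithout (adjOf k n q.1 r q.2) p : ℝ) + gainProb r p q x)
      (configMeasure k n m) :=
  (integrable_comp_adjOf r fun adj => (matchingNumberWithout adj p : ℝ)).add
    (integrable_gainProb r p x)

lemma abs_gainProb_sub_le (hk : 1 ≤ k) (r : Fin n → ℝ) (p : Fin n) (q : Config k n m) {x y : ℝ}
    (hx : 0 ≤ x) (hy : 0 ≤ y) :
    |gainProb r p q x - gainProb r p q y| ≤ m * (unitBallVolume k / n) * |x - y| := by
  set T := criticalSet (adjOf k n q.1 r q.2) p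
  rw [gainProb_eq_sum, gainProb_eq_sum, ← Finset.sum_sub_distrib]
  calc _ ≤ ∑ j ∈ T, |_ - _| := Finset.abs_sum_le_sum_abs _ _
    _ ≤ T.card • (unitBallVolume k / n * |x - y|) := Finset.sum_le_card_nsmul _ _ _ fun j _ =>
        abs_serviceArea_sub_le hk
          ((measurableSet_cube k 0 1).inter (measurableSet_voronoiCell T q.2 j)) _ hx hy
    _ ≤ m * (unitBallVolume k / n) * |x - y| := by
        have hV := unitBallVolume_pos k
        rw [nsmul_eq_mul, mul_assoc]
        gcongr
        exact card_finset_fin_le T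

lemma abs_muU_update_sub_le (hk : 1 ≤ k) (r : Fin n → ℝ) (p : Fin n) {x y : ℝ} (hx : 0 ≤ x)
    (hy : 0 ≤ y) :
    |muU k n m (Function.update r p x) - muU k n m (Function.update r p y)| ≤
      m * (unitBallVolume k / n) * |x - y| := by
  rw [muU_update, muU_update,
    ← integral_sub (integrable_matchingNumberWithout_add_gainProb r p x)
      (integrable_matchingNumberWithout_add_gainProb r p y)]
  simp only [add_sub_add_left_eq_sub]
  have hbound (q : Config k n m) : ‖gainProb r p q x - gainProb r p q y‖ ≤
      m * (unitBallVolume k / n) * |x - y| := abs_gainProb_sub_le hk r p q hx hy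
  simpa using norm_integral_le_of_norm_le_const (μ := configMeasure k n m)
    (ae_of_all _ hbound)

lemma jensenGap_muU_update {r : Fin n → ℝ} (r₀ : Fin n → ℝ) (p : Fin n) :
    jensenGap r (fun x => muU k n m (Function.update r₀ p x)) =
      ∫ q, jensenGap r (gainProb r₀ p q) ∂configMeasure k n m := by
  have : Nonempty (Fin n) := ⟨p⟩
  simp_rw [muU_update]
  rw [← integral_jensenGap convex_univ (fun i => Set.mem_univ (r i)) fun x _ =>
    integrable_matchingNumberWithout_add_gainProb r₀ p x]
  simp_rw [jensenGap_const_add]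

end Configurations

section IsolatedPairs

variable {k n m : ℕ} {M : ℝ} {r r₀ : Fin n → ℝ} {p : Fin n} {i j : Fin m} {q : Config k n m}

/-- Demand node `i` lies in the central cube and has no node within four times the maximal service
radius, with the possible exceptions of supply node `p` and demand node `j`. -/
def IsIsolated (M : ℝ) (p : Fin n) (i j : Fin m) (q : Config k n m) : Prop :=
  q.2 i ∈ cube k (1 / 4) (3 / 4) ∧
    (∀ l, l ≠ p → 4 * serviceRadius k n M < dist (q.1 l) (q.2 i)) ∧
    ∀ l, l ≠ i → l ≠ j → 4 * serviceRadius k n M < dist (q.2 l) (q.2 i)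

/-- Demand node `i` is isolated apart from demand node `j`, which is so close that the two compete
for the location of supply node `p`. -/
def IsIsolatedPair (M : ℝ) (p : Fin n) (i j : Fin m) (q : Config k n m) : Prop :=
  IsIsolated M p i j q ∧ dist (q.2 j) (q.2 i) ≤ 2 * serviceRadius k n M

lemma IsIsolated.closedBall_subset_cube (h : IsIsolated M p i j q) {ρ : ℝ} (hρ : ρ ≤ 1 / 4) :
    Metric.closedBall (q.2 i) ρ ⊆ cube k 0 1 :=
  _root_.closedBall_subset_cube fun l =>
    ⟨by linarith [(h.1 l).1], by linarith [(h.1 l).2]⟩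

lemma IsIsolatedPair.eq_right (h : IsIsolatedPair M p i j q) (hM : 0 ≤ M) {j' : Fin m}
    (h' : IsIsolatedPair M p i j' q) (hi : i ≠ j') : j' = j := by
  by_contra hne
  have := h.1.2.2 j' hi.symm hne
  linarith [h'.2, serviceRadius_nonneg (k := k) (n := n) hM]

lemma IsIsolated.left_mem_criticalSet (h : IsIsolated M p i j q)
    (hr₀ : ∀ l, r₀ l ∈ Set.Icc 0 M) : i ∈ criticalSet (adjOf k n q.1 r₀ q.2) p := by
  refine mem_criticalSet_of_isolated fun l hl (hadj : dist _ _ ≤ serviceRadius k n (r₀ l)) => ?_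
  have hρ := serviceRadius_mono (k := k) (n := n) (hr₀ l).1 (hr₀ l).2
  linarith [h.2.1 l hl, serviceRadius_nonneg (k := k) (n := n) (hr₀ l).1]

lemma IsIsolatedPair.right_mem_criticalSet (h : IsIsolatedPair M p i j q)
    (hr₀ : ∀ l, r₀ l ∈ Set.Icc 0 M) : j ∈ criticalSet (adjOf k n q.1 r₀ q.2) p := by
  refine mem_criticalSet_of_isolated fun l hl (hadj : dist _ _ ≤ serviceRadius k n (r₀ l)) => ?_
  have hρ := serviceRadius_mono (k := k) (n := n) (hr₀ l).1 (hr₀ l).2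
  linarith [h.1.2.1 l hl, h.2, dist_triangle (q.1 l) (q.2 j) (q.2 i),
    serviceRadius_nonneg (k := k) (n := n) (hr₀ l).1]

lemma IsIsolatedPair.mem_voronoiCell_iff (h : IsIsolatedPair M p i j q) (hij : i < j)
    {T : Finset (Fin m)} (hj : j ∈ T) {y : Loc k} (hy : dist y (q.2 i) ≤ serviceRadius k n M) :
    y ∈ voronoiCell T q.2 i ↔ y ∈ halfSpace (q.2 i) (q.2 j) := by
  refine ⟨fun hcell => dist_le_of_mem_voronoiCell hcell hj, fun hhalf => ?_⟩
  simp only [voronoiCell_eq_iInter, Set.mem_iInter]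
  intro l _
  by_cases hli : l = i
  · exact Or.inr ⟨hli.ge, hli ▸ le_rfl⟩
  by_cases hlj : l = j
  · exact Or.inr ⟨hlj ▸ hij.le, hlj ▸ hhalf⟩
  have hfar := h.1.2.2 l hli hlj
  have htriangle := dist_triangle_left (q.2 l) (q.2 i) y
  exact Or.inl (by linarith [dist_nonneg (x := y) (y := q.2 i)])

lemma IsIsolatedPair.eqOn_serviceArea (h : IsIsolatedPair M p i j q) (hij : i < j)
    (hρ : serviceRadius k n M ≤ 1 / 4) {T : Finset (Fin m)} (hj : j ∈ T) :
    Set.EqOn (serviceArea k n (cube k 0 1 ∩ voronoiCell T q.2 i) (q.2 i))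
      (serviceArea k n (halfSpace (q.2 i) (q.2 j)) (q.2 i)) (Set.Icc 0 M) := by
  intro x hx
  refine congrArg volume.real (Set.ext fun y => and_congr_left fun hy => ?_)
  have hyM : dist y (q.2 i) ≤ serviceRadius k n M :=
    (Metric.mem_closedBall.1 hy).trans (serviceRadius_mono hx.1 hx.2)
  rw [Set.mem_inter_iff, h.mem_voronoiCell_iff hij hj hyM,
    and_iff_right (h.1.closedBall_subset_cube hρ hyM)]

/-- The contribution of the pair `(i, j)` to the Jensen gap of `gainProb`. -/
def pairGap (M : ℝ) (r : Fin n → ℝ) (p : Fin n) (i j : Fin m) (q : Config k n m) : ℝ :=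
  if IsIsolatedPair M p i j q then
    jensenGap r (serviceArea k n (halfSpace (q.2 i) (q.2 j)) (q.2 i)) else 0

lemma jensenGap_serviceArea_voronoiCell_nonneg [Nonempty (Fin n)] (hk : 1 ≤ k)
    (hr : ∀ l, r l ∈ Set.Icc 0 M) (hq : q.2 i ∈ cube k 0 1) (T : Finset (Fin m)) :
    0 ≤ jensenGap r (serviceArea k n (cube k 0 1 ∩ voronoiCell T q.2 i) (q.2 i)) :=
  jensenGap_nonneg
    (concaveOn_serviceArea hk ((measurableSet_cube k 0 1).inter (measurableSet_voronoiCell T q.2 i))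
      (((convex_cube k 0 1).starConvex hq).inter (starConvex_voronoiCell T q.2 i)))
    fun l => (hr l).1

lemma sum_Ioi_pairGap_eq (hM : 0 ≤ M) (hij : i < j) (h : IsIsolatedPair M p i j q) :
    ∑ j' ∈ Finset.Ioi i, pairGap M r p i j' q =
      jensenGap r (serviceArea k n (halfSpace (q.2 i) (q.2 j)) (q.2 i)) := by
  rw [Finset.sum_eq_single_of_mem j (Finset.mem_Ioi.2 hij), pairGap, if_pos h]
  exact fun j' hj' hne =>
    if_neg fun h' => hne (h.eq_right hM h' (Finset.mem_Ioi.1 hj').ne)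

lemma sum_Ioi_pairGap_le (hk : 1 ≤ k) (hρ : serviceRadius k n M ≤ 1 / 4)
    (hr : ∀ l, r l ∈ Set.Icc 0 M) (hr₀ : ∀ l, r₀ l ∈ Set.Icc 0 M) (hq : q.2 i ∈ cube k 0 1) :
    ∑ j ∈ Finset.Ioi i, pairGap M r p i j q ≤
      if i ∈ criticalSet (adjOf k n q.1 r₀ q.2) p then
        jensenGap r (serviceArea k n
          (cube k 0 1 ∩ voronoiCell (criticalSet (adjOf k n q.1 r₀ q.2) p) q.2 i) (q.2 i))
      else 0 := by
  have : Nonempty (Fin n) := ⟨p⟩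
  by_cases hpair : ∃ j, i < j ∧ IsIsolatedPair M p i j q
  · obtain ⟨j, hij, h⟩ := hpair
    rw [sum_Ioi_pairGap_eq ((hr p).1.trans (hr p).2) hij h,
      if_pos (h.1.left_mem_criticalSet hr₀)]
    exact (jensenGap_congr (convex_Icc 0 M) hr
      (h.eqOn_serviceArea hij hρ (h.right_mem_criticalSet hr₀))).ge
  · have hzero (j) (hj : j ∈ Finset.Ioi i) : pairGap M r p i j q = 0 :=
      if_neg fun h => hpair ⟨j, Finset.mem_Ioi.1 hj, h⟩
    rw [Finset.sum_eq_zero hzero]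
    split_ifs
    · exact jensenGap_serviceArea_voronoiCell_nonneg hk hr hq _
    · exact le_rfl

lemma sum_pairGap_le_jensenGap_gainProb (hk : 1 ≤ k) (hρ : serviceRadius k n M ≤ 1 / 4)
    (hr : ∀ l, r l ∈ Set.Icc 0 M) (hr₀ : ∀ l, r₀ l ∈ Set.Icc 0 M)
    (hq : ∀ i, q.2 i ∈ cube k 0 1) :
    ∑ i, ∑ j ∈ Finset.Ioi i, pairGap M r p i j q ≤ jensenGap r (gainProb r₀ p q) := by
  have hgain : gainProb r₀ p q = _ := funext (gainProb_eq_sum r₀ p q)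
  rw [hgain, jensenGap_sum, ← Finset.sum_ite_mem_eq (criticalSet _ p)]
  exact Finset.sum_le_sum fun i _ => sum_Ioi_pairGap_le hk hρ hr hr₀ (hq i)

end IsolatedPairs

section IsolationProbability

variable {k n m : ℕ} {M : ℝ}

lemma exp_neg_two_mul_le_one_sub {t : ℝ} (ht : 0 ≤ t) (ht' : t ≤ 1 / 2) :
    Real.exp (-(2 * t)) ≤ 1 - t := by
  have hpos : 0 < 1 - t := by linarith
  rw [← Real.le_log_iff_exp_le hpos]
  have hlog := Real.one_sub_inv_le_log_of_pos hpos
  have hinv : (1 - t)⁻¹ ≤ 1 + 2 * t := by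
    rw [inv_le_iff_one_le_mul₀ hpos]
    nlinarith
  linarith

lemma mul_measureReal_le_of_measurePreserving {α β : Type*} [MeasurableSpace α]
    [MeasurableSpace β] {μ : Measure α} {ν : Measure β} [IsFiniteMeasure μ] [SFinite ν]
    {Φ : α × β → α} (hΦ : MeasurePreserving Φ (μ.prod ν) μ) {A : Set α} (hA : MeasurableSet A)
    {B : Set β} {c : ℝ} (hc : 0 ≤ c) (h : ∀ y ∈ B, c ≤ μ.real {x | Φ (x, y) ∈ A}) :
    c * ν.real B ≤ μ.real A := by
  have hmeas := hΦ.measurable hA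
  have hle : ENNReal.ofReal c * ν B ≤ μ A := calc
    ENNReal.ofReal c * ν B = ∫⁻ _ in B, ENNReal.ofReal c ∂ν := (setLIntegral_const _ _).symm
    _ ≤ ∫⁻ y in B, μ ((fun x => (x, y)) ⁻¹' (Φ ⁻¹' A)) ∂ν :=
        setLIntegral_mono (measurable_measure_prodMk_right hmeas) fun y hy =>
          ENNReal.ofReal_le_of_le_toReal (h y hy)
    _ ≤ ∫⁻ y, μ ((fun x => (x, y)) ⁻¹' (Φ ⁻¹' A)) ∂ν := setLIntegral_le_lintegral _ _
    _ = μ A := by rw [← Measure.prod_apply_symm hmeas, hΦ.measure_preimage hA.nullMeasurableSet]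
  have := ENNReal.toReal_mono (measure_ne_top μ A) hle
  rwa [ENNReal.toReal_mul, ENNReal.toReal_ofReal hc] at this

lemma unifCube_real_cube {a b : ℝ} (ha : 0 ≤ a) (hab : a ≤ b) (hb : b ≤ 1) :
    (unifCube k).real (cube k a b) = (b - a) ^ k := by
  have hsub : cube k a b ∩ cube k 0 1 = cube k a b :=
    Set.inter_eq_left.2 fun y hy l => ⟨ha.trans (hy l).1, (hy l).2.trans hb⟩
  calc (unifCube k).real (cube k a b) = volume.real (cube k a b ∩ cube k 0 1) :=
        measureReal_restrict_apply' (measurableSet_cube k 0 1)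
    _ = (b - a) ^ k := by
        rw [hsub, measureReal_def, volume_cube, ENNReal.toReal_pow,
          ENNReal.toReal_ofReal (sub_nonneg.2 hab)]

lemma one_sub_le_unifCube_real_lt_dist (d : Loc k) {ρ : ℝ} (hρ : 0 ≤ ρ) :
    1 - ρ ^ k * unitBallVolume k ≤ (unifCube k).real {y | ρ < dist y d} := by
  have hcompl : {y | ρ < dist y d} = (Metric.closedBall d ρ)ᶜ := by
    ext y
    simp
  rw [hcompl, probReal_compl_eq_one_sub measurableSet_closedBall,
    ← volume_real_closedBall d hρ]
  gcongr
  exact ENNReal.toReal_mono measure_closedBall_lt_top.ne (Measure.restrict_le_self _)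

lemma measurableSet_isIsolated (M : ℝ) (p : Fin n) (i j : Fin m) :
    MeasurableSet {q : Config k n m | IsIsolated M p i j q} := by
  have hcube : MeasurableSet {q : Config k n m | q.2 i ∈ cube k (1 / 4) (3 / 4)} :=
    (measurableSet_cube k _ _).preimage (by fun_prop)
  have hsupply (l : Fin n) : MeasurableSet
      {q : Config k n m | 4 * serviceRadius k n M < dist (q.1 l) (q.2 i)} :=
    measurableSet_lt measurable_const (by fun_prop)
  have hdemand (l : Fin m) : MeasurableSet
      {q : Config k n m | 4 * serviceRadius k n M < dist (q.2 l) (q.2 i)} :=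
    measurableSet_lt measurable_const (by fun_prop)
  simp only [measurableSet_setOfPred, IsIsolated] at hcube hsupply hdemand ⊢
  exact hcube.and (.and (.forall fun l => .imp measurable_const (hsupply l))
    (.forall fun l => .imp measurable_const (.imp measurable_const (hdemand l))))

lemma pow_le_measureReal_isIsolated_update (p : Fin n) (i j : Fin m) {z : Loc k}
    (hz : z ∈ cube k (1 / 4) (3 / 4)) :
    (unifCube k).real {y | 4 * serviceRadius k n M < dist y z} ^ (n + m) ≤
      (configMeasure k n m).real
        {q | IsIsolated M p i j ((q.1, Function.update q.2 i z) : Config k n m)} := by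
  set far : Set (Loc k) := {y | 4 * serviceRadius k n M < dist y z}
  have hsub : (Set.univ.pi fun _ : Fin n => far) ×ˢ (Set.univ.pi fun _ : Fin m => far) ⊆
      {q | IsIsolated M p i j ((q.1, Function.update q.2 i z) : Config k n m)} := by
    rintro q ⟨hsupply, hdemand⟩
    refine ⟨by simpa using hz, fun l _ => by simpa [far] using hsupply l trivial, fun l hl _ => ?_⟩
    simpa [far, Function.update_of_ne hl] using hdemand l trivial
  calc (unifCube k).real far ^ (n + m)
      = (configMeasure k n m).real
          ((Set.univ.pi fun _ : Fin n => far) ×ˢ (Set.univ.pi fun _ : Fin m => far)) := by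
        simp [measureReal_def, Measure.pi_pi, pow_add]
    _ ≤ _ := measureReal_mono hsub

lemma le_measureReal_isIsolated (hk : 1 ≤ k) (hM : 0 ≤ M)
    (hsmall : 4 ^ k * (M / n) * unitBallVolume k ≤ 1 / 2) (p : Fin n) (i j : Fin m) :
    Real.exp (-(2 * (4 ^ k * (M / n) * unitBallVolume k))) ^ (n + m) * (1 / 2) ^ k ≤
      (configMeasure k n m).real {q | IsIsolated M p i j q} := by
  have hV := unitBallVolume_pos k
  have hradius : (4 * serviceRadius k n M) ^ k = 4 ^ k * (M / n) := by
    rw [mul_pow, serviceRadius_pow hk hM]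
  have hcube := unifCube_real_cube (k := k) (a := 1 / 4) (b := 3 / 4) (by norm_num) (by norm_num)
    (by norm_num)
  norm_num only at hcube
  rw [← hcube]
  refine mul_measureReal_le_of_measurePreserving (measurePreserving_update_demand i)
    (measurableSet_isIsolated M p i j) (by positivity) fun z hz => ?_
  refine le_trans ?_ (pow_le_measureReal_isIsolated_update p i j hz)
  gcongr
  calc Real.exp (-(2 * (4 ^ k * (M / n) * unitBallVolume k)))
      ≤ 1 - 4 ^ k * (M / n) * unitBallVolume k :=
        exp_neg_two_mul_le_one_sub (by positivity) hsmall
    _ ≤ _ := by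
        rw [← hradius]
        exact one_sub_le_unifCube_real_lt_dist z
          (mul_nonneg (by norm_num) (serviceRadius_nonneg hM))

end IsolationProbability

section GapIntegral

variable {k n m : ℕ} {M : ℝ} {r r₀ : Fin n → ℝ}

lemma measurable_pairGap (M : ℝ) (r : Fin n → ℝ) (p : Fin n) (i j : Fin m) :
    Measurable (pairGap (k := k) M r p i j) := by
  have hpair : MeasurableSet {q : Config k n m | IsIsolatedPair M p i j q} := by
    simp only [IsIsolatedPair, Set.ofPred_and]
    exact (measurableSet_isIsolated M p i j).inter
      (measurableSet_le (by fun_prop) measurable_const)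
  have hgap : Measurable fun w : Loc k × Loc k =>
      jensenGap r (serviceArea k n (halfSpace w.1 w.2) w.1) :=
    measurable_jensenGap fun x => measurable_serviceArea_halfSpace k n x
  have hproj : Measurable fun q : Config k n m => (q.2 i, q.2 j) := by fun_prop
  have hindicator := (hgap.comp hproj).indicator hpair
  convert hindicator using 1
  exact funext fun q => by simp [pairGap, Set.indicator_apply]

lemma integrable_pairGap (hk : 1 ≤ k) (hr : ∀ l, r l ∈ Set.Icc 0 M) (p : Fin n) (i j : Fin m) :
    Integrable (pairGap (k := k) M r p i j) (configMeasure k n m) := by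
  have : Nonempty (Fin n) := ⟨p⟩
  have hM : 0 ≤ M := (hr p).1.trans (hr p).2
  refine Integrable.of_bound (C := M / n * unitBallVolume k)
    (measurable_pairGap M r p i j).aestronglyMeasurable (ae_of_all _ fun q => ?_)
  have hV := unitBallVolume_pos k
  unfold pairGap
  split_ifs
  · exact abs_jensenGap_le (convex_Icc 0 M) hr fun x hx => serviceArea_mem_Icc hk _ _ hx
  · rw [norm_zero]
    positivity

lemma integral_pairGap_update (hk : 1 ≤ k) (hr : ∀ l, r l ∈ Set.Icc 0 M)
    (hρ : serviceRadius k n M ≤ 1 / 8) (p : Fin n) {i j : Fin m} (hij : i ≠ j)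
    (q : Config k n m) :
    ∫ z, pairGap M r p i j ((q.1, Function.update q.2 j z) : Config k n m) ∂unifCube k =
      {q | IsIsolated M p i j q}.indicator
        (fun _ => (unitBallVolume k / n) ^ 2 / 2 * empVar r) q := by
  have : Nonempty (Fin n) := ⟨p⟩
  have hiso (z : Loc k) : IsIsolated M p i j ((q.1, Function.update q.2 j z) : Config k n m) ↔
      IsIsolated M p i j q := by
    have hl (l : Fin m) (h : l ≠ j) : Function.update q.2 j z l = q.2 l :=
      Function.update_of_ne h _ _
    simp +contextual only [IsIsolated, hl i hij, hl, ne_eq, not_false_eq_true]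
  by_cases h : IsIsolated M p i j q
  · set ball := Metric.closedBall (q.2 i) (2 * serviceRadius k n M)
    have hball : ball ⊆ cube k 0 1 := h.closedBall_subset_cube (by linarith)
    have hgap (z : Loc k) : pairGap M r p i j ((q.1, Function.update q.2 j z) : Config k n m) =
        ball.indicator
          (fun z => jensenGap r (serviceArea k n (halfSpace (q.2 i) z) (q.2 i))) z := by
      simp [pairGap, IsIsolatedPair, hiso, h, Set.indicator_apply, ball, Function.update_of_ne hij]
    rw [Set.indicator_of_mem (Set.mem_ofPred.2 h),
      ← setIntegral_jensenGap_serviceArea_halfSpace hk (q.2 i) hr,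
      ← Measure.restrict_restrict_of_subset hball, ← integral_indicator measurableSet_closedBall]
    simp only [hgap]
    rfl
  · rw [Set.indicator_of_notMem (mt Set.mem_ofPred.1 h)]
    simp [pairGap, IsIsolatedPair, hiso, h]

lemma integral_pairGap (hk : 1 ≤ k) (hr : ∀ l, r l ∈ Set.Icc 0 M)
    (hρ : serviceRadius k n M ≤ 1 / 8) (p : Fin n) {i j : Fin m} (hij : i ≠ j) :
    ∫ q, pairGap M r p i j q ∂configMeasure k n m =
      (configMeasure k n m).real {q | IsIsolated M p i j q} *
        ((unitBallVolume k / n) ^ 2 / 2 * empVar r) := by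
  rw [integral_eq_integral_integral_of_measurePreserving (measurePreserving_update_demand j)
    (integrable_pairGap hk hr p i j)]
  simp only [integral_pairGap_update hk hr hρ p hij]
  rw [integral_indicator_const _ (measurableSet_isIsolated M p i j), smul_eq_mul]

lemma sq_div_four_le_sum_card_Ioi (hm : 2 ≤ m) :
    (m : ℝ) ^ 2 / 4 ≤ ∑ i : Fin m, ((Finset.Ioi i).card : ℝ) := by
  have hsum : (∑ i : Fin m, (Finset.Ioi i).card) * 2 = m * (m - 1) := by
    simp only [Fin.card_Ioi]
    rw [Fin.sum_univ_eq_sum_range fun i => m - 1 - i, Finset.sum_range_reflect (fun i => i),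
      Finset.sum_range_id_mul_two]
  have hsum' : (∑ i : Fin m, ((Finset.Ioi i).card : ℝ)) * 2 = m * (m - 1) := by
    rw [← Nat.cast_pred (by lia)]
    exact_mod_cast hsum
  have hm' : (2 : ℝ) ≤ m := by exact_mod_cast hm
  nlinarith

lemma le_jensenGap_muU_update (hk : 1 ≤ k) (hm : 2 ≤ m) (hρ : serviceRadius k n M ≤ 1 / 8)
    (hsmall : 4 ^ k * (M / n) * unitBallVolume k ≤ 1 / 2) (hr : ∀ l, r l ∈ Set.Icc 0 M)
    (hr₀ : ∀ l, r₀ l ∈ Set.Icc 0 M) (p : Fin n) :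
    m ^ 2 / 4 * (Real.exp (-(2 * (4 ^ k * (M / n) * unitBallVolume k))) ^ (n + m) * (1 / 2) ^ k *
        ((unitBallVolume k / n) ^ 2 / 2 * empVar r)) ≤
      jensenGap r fun x => muU k n m (Function.update r₀ p x) := by
  set c := Real.exp (-(2 * (4 ^ k * (M / n) * unitBallVolume k))) ^ (n + m) * (1 / 2) ^ k
  set v := (unitBallVolume k / n) ^ 2 / 2 * empVar r
  have hv : 0 ≤ v := mul_nonneg (by positivity) (Finset.expect_nonneg fun _ _ => sq_nonneg _)
  have hpair {i j : Fin m} (hij : i ≠ j) :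
      c * v ≤ ∫ q, pairGap M r p i j q ∂configMeasure k n m := by
    rw [integral_pairGap hk hr hρ p hij]
    gcongr
    exact le_measureReal_isIsolated hk ((hr p).1.trans (hr p).2) hsmall p i j
  have hintegrable (i : Fin m) : Integrable (fun q : Config k n m =>
      ∑ j ∈ Finset.Ioi i, pairGap M r p i j q) (configMeasure k n m) :=
    integrable_finsetSum _ fun j _ => integrable_pairGap hk hr p i j
  calc m ^ 2 / 4 * (c * v) ≤ (∑ i : Fin m, ((Finset.Ioi i).card : ℝ)) * (c * v) := by
        gcongr
        exact sq_div_four_le_sum_card_Ioi hm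
    _ = ∑ i : Fin m, ∑ _j ∈ Finset.Ioi i, c * v := by simp [Finset.sum_mul]
    _ ≤ ∑ i, ∑ j ∈ Finset.Ioi i, ∫ q, pairGap M r p i j q ∂configMeasure k n m :=
        Finset.sum_le_sum fun i _ => Finset.sum_le_sum fun j hj =>
          hpair (Finset.mem_Ioi.1 hj).ne
    _ = ∫ q, ∑ i, ∑ j ∈ Finset.Ioi i, pairGap M r p i j q ∂configMeasure k n m := by
        rw [integral_finsetSum _ fun i _ => hintegrable i]
        exact Finset.sum_congr rfl fun i _ =>
          (integral_finsetSum _ fun j _ => integrable_pairGap hk hr p i j).symm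
    _ ≤ ∫ q, jensenGap r (gainProb r₀ p q) ∂configMeasure k n m := by
        have : Nonempty (Fin n) := ⟨p⟩
        refine integral_mono_ae (integrable_finsetSum _ fun i _ => hintegrable i)
          (integrable_jensenGap convex_univ (fun _ => trivial) fun x _ =>
            integrable_gainProb r₀ p x) ?_
        filter_upwards [ae_demand_mem_cube k n m] with q hq
        exact sum_pairGap_le_jensenGap_gainProb hk (by linarith) hr hr₀ hq
    _ = _ := (jensenGap_muU_update r₀ p).symm

end GapIntegral

section Domination

open Filter Topology

variable {k n m : ℕ} {β M : ℝ} {r : Fin n → ℝ}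

/-- The factor between the variance of an allocation and the Jensen gap of the expected matching
size, as a function of one service range, that isolated pairs of demand nodes account for. -/
def gapConst (k : ℕ) (β M : ℝ) : ℝ :=
  (β * unitBallVolume k) ^ 2 / 8 *
    (Real.exp (-(2 * (4 ^ k * M * unitBallVolume k) * (1 + β))) * (1 / 2) ^ k)

lemma gapConst_pos (k : ℕ) (hβ : 0 < β) (M : ℝ) : 0 < gapConst k β M := by
  have := unitBallVolume_pos k
  unfold gapConst
  positivity

/-- The regime in which a neighbourhood of a central demand node fits into the unit cube and is
likely to contain no other node. -/
structure IsSparse (k n m : ℕ) (M : ℝ) : Prop where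
  two_le : 2 ≤ m
  radius_le : serviceRadius k n M ≤ 1 / 8
  volume_le : 4 ^ k * (M / n) * unitBallVolume k ≤ 1 / 2

lemma eventually_isSparse (hk : 1 ≤ k) (hβ : 0 < β) (M : ℝ) :
    ∀ᶠ n : ℕ in atTop, ∀ m : ℕ, (m : ℝ) = β * n → IsSparse k n m M := by
  have hratio : Tendsto (fun n : ℕ => M / n) atTop (𝓝 0) :=
    tendsto_const_div_atTop_nhds_zero_nat M
  have hradius : Tendsto (fun n : ℕ => serviceRadius k n M) atTop (𝓝 0) := by
    have hexp : (0 : ℝ) < 1 / k := by positivity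
    rw [← Real.zero_rpow hexp.ne']
    exact hratio.rpow_const (Or.inr hexp.le)
  have hvolume : Tendsto (fun n : ℕ => 4 ^ k * (M / n) * unitBallVolume k) atTop (𝓝 0) := by
    simpa using (hratio.const_mul (4 ^ k)).mul_const (unitBallVolume k)
  have hdemand : Tendsto (fun n : ℕ => β * n) atTop atTop :=
    tendsto_natCast_atTop_atTop.const_mul_atTop hβ
  filter_upwards [hradius.eventually_le_const (by norm_num : (0 : ℝ) < 1 / 8),
    hvolume.eventually_le_const (by norm_num : (0 : ℝ) < 1 / 2),
    hdemand.eventually_ge_atTop 2] with n hradius hvolume hdemand m hm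
  exact ⟨by exact_mod_cast hm ▸ hdemand, hradius, hvolume⟩

lemma gapConst_mul_empVar_le (hk : 1 ≤ k) (hsparse : IsSparse k n m M) (hm : (m : ℝ) = β * n)
    (hr : ∀ i, r i ∈ Set.Icc 0 M) {r₀ : Fin n → ℝ} (hr₀ : ∀ i, r₀ i ∈ Set.Icc 0 M) (p : Fin n) :
    gapConst k β M * empVar r ≤ jensenGap r fun x => muU k n m (Function.update r₀ p x) := by
  have hn : (n : ℝ) ≠ 0 := by exact_mod_cast p.pos.ne'
  have hexp : Real.exp (-(2 * (4 ^ k * (M / n) * unitBallVolume k))) ^ (n + m) =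
      Real.exp (-(2 * (4 ^ k * M * unitBallVolume k) * (1 + β))) := by
    rw [← Real.exp_nat_mul, Nat.cast_add, hm]
    congr 1
    field_simp
  refine le_of_eq_of_le ?_
    (le_jensenGap_muU_update hk hsparse.two_le hsparse.radius_le hsparse.volume_le hr hr₀ p)
  rw [hexp, hm, gapConst]
  field_simp
  ring

lemma muU_le_muU_const_sub_add [NeZero n] (hk : 1 ≤ k) (hβ : 0 ≤ β) (hsparse : IsSparse k n m M)
    (hm : (m : ℝ) = β * n) (hr : ∀ i, r i ∈ Set.Icc 0 M) {l : ℝ} (hl : 0 < l) :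
    muU k n m r ≤ muU k n m (fun _ : Fin n => 𝔼 j, r j) - n * (gapConst k β M * empVar r) +
      β * unitBallVolume k * (M / (2 * l) + l / 2 * ∑ i, |r i - 𝔼 j, r j|) := by
  have hL : (m : ℝ) * (unitBallVolume k / n) = β * unitBallVolume k := by
    have : (n : ℝ) ≠ 0 := NeZero.ne _
    rw [hm]
    field_simp
  refine le_const_expect_sub_add (mul_nonneg hβ (unitBallVolume_pos k).le) hr
    (fun r₀ hr₀ p => gapConst_mul_empVar_le hk hsparse hm hr hr₀ p)
    (fun r p x y hx hy => ?_) muU_comp_perm hl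
  rw [← hL]
  exact abs_muU_update_sub_le hk r p hx hy

/-- With `T` the mean deviation, the gap is at least of order `n * T ^ 2`, and for `l` of order `T`
the error term is at most half of it plus a term of order `1 / T`. -/
lemma muU_lt_muU_const [NeZero n] (hk : 1 ≤ k) (hβ : 0 < β) (hsparse : IsSparse k n m M)
    (hm : (m : ℝ) = β * n) (hr : ∀ i, r i ∈ Set.Icc 0 M)
    (hdev : (β * unitBallVolume k) ^ 2 * M / gapConst k β M ^ 2 <
      n * (𝔼 i, |r i - 𝔼 j, r j|) ^ 3) :
    muU k n m r < muU k n m fun _ : Fin n => 𝔼 j, r j := by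
  have hV := unitBallVolume_pos k
  have hc := gapConst_pos k hβ M
  set c := gapConst k β M
  set L := β * unitBallVolume k
  set T := 𝔼 i, |r i - 𝔼 j, r j| with hT
  have hL : 0 < L := by positivity
  have hM : 0 ≤ M := (hr 0).1.trans (hr 0).2
  have hTpos : 0 < T := by
    have hcube : 0 < n * T ^ 3 := lt_of_le_of_lt (by positivity) hdev
    exact (by decide : Odd 3).pow_pos_iff.1 (pos_of_mul_pos_right hcube n.cast_nonneg)
  have hsum : ∑ i, |r i - 𝔼 j, r j| = n * T := by
    rw [hT, ← Fintype.card_mul_expect, Fintype.card_fin]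
  have hvar : T ^ 2 ≤ empVar r := sq_expect_abs_sub_expect_le_empVar r
  have hbound := muU_le_muU_const_sub_add hk hβ.le hsparse hm hr (l := c * T / L) (by positivity)
  rw [hsum] at hbound
  have herror : L * (M / (2 * (c * T / L)) + c * T / L / 2 * (n * T)) < n * (c * T ^ 2) := by
    rw [div_lt_iff₀ (by positivity)] at hdev
    field_simp
    linarith
  have hgap : n * (c * T ^ 2) ≤ n * (c * empVar r) := by gcongr
  linarith

lemma lt_mul_pow_three_of_rpow_lt {K x T : ℝ} (hK : 0 ≤ K) (hx : 0 < x)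
    (h : K ^ ((1 : ℝ) / 3) * x ^ ((2 : ℝ) / 3) < x * T) : K < x * T ^ 3 := by
  have hK3 : (K ^ ((1 : ℝ) / 3)) ^ 3 = K := by
    rw [← Real.rpow_mul_natCast hK]
    norm_num
  have hx3 : (x ^ ((2 : ℝ) / 3)) ^ 3 = x ^ 2 := by
    rw [← Real.rpow_mul_natCast hx.le]
    norm_num
  have hcube := pow_lt_pow_left₀ h (by positivity) three_ne_zero
  rw [mul_pow, hK3, hx3] at hcube
  exact lt_of_mul_lt_mul_right (by linarith : K * x ^ 2 < x * T ^ 3 * x ^ 2) (by positivity)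

end Domination

section Rates

lemma rpow_neg_third_le_log_div_rpow {n : ℕ} (hn : 3 ≤ n) :
    (n : ℝ) ^ (-(1 : ℝ) / 3) ≤ (Real.log n / n) ^ ((1 : ℝ) / 3) := by
  have hn3 : (3 : ℝ) ≤ n := by exact_mod_cast hn
  have hlog : 1 ≤ Real.log n := by
    rw [Real.le_log_iff_exp_le (by linarith)]
    linarith [Real.exp_one_lt_d9]
  calc (n : ℝ) ^ (-(1 : ℝ) / 3) = (1 / n) ^ ((1 : ℝ) / 3) := by
        rw [neg_div, Real.rpow_neg n.cast_nonneg, one_div (n : ℝ), Real.inv_rpow n.cast_nonneg]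
    _ ≤ (Real.log n / n) ^ ((1 : ℝ) / 3) := by gcongr

lemma rpow_neg_third_le_rpow {k n : ℕ} (hn : 1 ≤ n) :
    (n : ℝ) ^ (-(1 : ℝ) / 3) ≤ (n : ℝ) ^ (-(1 : ℝ) / (4 * ((k : ℝ) + 1))) := by
  refine Real.rpow_le_rpow_of_exponent_le (by exact_mod_cast hn) ?_
  rw [neg_div, neg_div, neg_le_neg_iff]
  gcongr
  linarith [k.cast_nonneg (α := ℝ)]

lemma mul_rpow_two_thirds_lt_of_rate_lt {k n : ℕ} {C θ : ℝ} (hC : 0 < C) (hn : 3 ≤ n)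
    (hθ : if k = 1 then C * (Real.log n / n) ^ ((1 : ℝ) / 3) < θ
      else C * (n : ℝ) ^ (-(1 : ℝ) / (4 * ((k : ℝ) + 1))) < θ) :
    C * (n : ℝ) ^ ((2 : ℝ) / 3) < θ * n := by
  have hn0 : (0 : ℝ) < n := by positivity
  have hrate : C * (n : ℝ) ^ (-(1 : ℝ) / 3) < θ := by
    split_ifs at hθ
    · exact (mul_le_mul_of_nonneg_left (rpow_neg_third_le_log_div_rpow hn) hC.le).trans_lt hθ
    · exact (mul_le_mul_of_nonneg_left (rpow_neg_third_le_rpow (by lia)) hC.le).trans_lt hθ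
  calc C * (n : ℝ) ^ ((2 : ℝ) / 3) = C * (n : ℝ) ^ (-(1 : ℝ) / 3) * n := by
        rw [mul_assoc, ← Real.rpow_add_one hn0.ne']
        norm_num
    _ < θ * n := by gcongr

end Rates

theorem uniform_allocation_dominates_general (k : ℕ) (hk : 1 ≤ k) (β M : ℝ) (hβ : 0 < β)
    (hM : 0 < M) :
    ∃ C : ℝ, 0 < C ∧ ∃ N : ℕ, ∀ n : ℕ, N ≤ n → ∀ m : ℕ, (m : ℝ) = β * n →
      ∀ r : Fin n → ℝ, (∀ i, r i ∈ Set.Icc (0 : ℝ) M) →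
        C * (n : ℝ) ^ ((2 : ℝ) / 3) < ∑ i, |r i - (∑ j, r j) / n| →
        muU k n m r < muU k n m (fun _ : Fin n => (∑ j, r j) / n) := by
  have hV := unitBallVolume_pos k
  have hc := gapConst_pos k hβ M
  set K := (β * unitBallVolume k) ^ 2 * M / gapConst k β M ^ 2
  obtain ⟨N, hN⟩ := Filter.eventually_atTop.1 (eventually_isSparse hk hβ M)
  refine ⟨K ^ ((1 : ℝ) / 3), by positivity, max N 1, fun n hn m hm r hr hdev => ?_⟩
  have : NeZero n := ⟨Nat.one_le_iff_ne_zero.1 (le_of_max_le_right hn)⟩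
  have hmean : (∑ j, r j) / n = 𝔼 j, r j := by
    rw [Fintype.expect_eq_sum_div_card, Fintype.card_fin]
  have hsum : ∑ i, |r i - 𝔼 j, r j| = n * 𝔼 i, |r i - 𝔼 j, r j| := by
    rw [← Fintype.card_mul_expect, Fintype.card_fin]
  rw [hmean, hsum] at hdev
  rw [hmean]
  exact muU_lt_muU_const hk hβ (hN n (le_of_max_le_left hn) m hm) hm hr
    (lt_mul_pow_three_of_rpow_lt (by positivity) (by simp [NeZero.pos n]) hdev)

/-- **Uniform allocation dominates.**
Fix `k ≥ 1`, a demand-to-supply ratio `β > 0` and `M ≥ max {1, 1/β}`. Given a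
service-range vector `r ∈ [0,M]^n`, let `r̄` be the uniform allocation with value
`‖r‖₁/n`. There exist `C > 0` depending only on `β`, `M` (and `k`) and an integer `N`
such that for all `n ≥ N` with `m = βn`: if `‖r - r̄‖₁ > θ n` where
`θ > C (log n / n)^{1/3}` in the case `k = 1`, or `θ > C n^{-1/(4(k+1))}` in the case
`k ≥ 2`, then `μ_m(r̄) > μ_m(r)`. -/
theorem uniform_allocation_dominates (k : ℕ) (hk : 1 ≤ k)
    (β M : ℝ) (hβ : 0 < β) (hM : max 1 β⁻¹ ≤ M) :
    ∃ C : ℝ, 0 < C ∧ ∃ N : ℕ, ∀ n : ℕ, N ≤ n → ∀ m : ℕ, (m : ℝ) = β * n →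
      ∀ r : Fin n → ℝ, (∀ i, r i ∈ Set.Icc (0 : ℝ) M) →
        ∀ θ : ℝ,
          (if k = 1 then C * (Real.log n / n) ^ ((1 : ℝ) / 3) < θ
            else C * (n : ℝ) ^ (-(1 : ℝ) / (4 * ((k : ℝ) + 1))) < θ) →
          θ * n < ∑ i, |r i - (∑ j, r j) / n| →
          muU k n m r < muU k n m (fun _ : Fin n => (∑ j, r j) / n) := by
  obtain ⟨C, hC, N, hN⟩ := uniform_allocation_dominates_general k hk β M hβ
    (one_pos.trans_le (le_of_max_le_left hM))
  exact ⟨C, hC, max N 3, fun n hn m hm r hr θ hθ hdev =>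
    hN n (le_of_max_le_left hn) m hm r hr
      ((mul_rpow_two_thirds_lt_of_rate_lt hC (le_of_max_le_right hn) hθ).trans hdev)⟩

end
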